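/- Conditional spectral gap with local particle-number averaging: Let d ≥ 2, ρ ∈ (0,1) and p ≥ 1 be a real number. There exists a constant C(d,ρ,p) < ∞ such that the following holds for all integers ℓ, L ≥ 1 such that (2ℓ+1) divides (2L+1), with B_L partitioned into m = (2L+1)^d/(2ℓ+1)^d disjoint translates B_{ℓ,1},…,B_{ℓ,m} of B_ℓ. For every bounded nonnegative function h on {(x,η) ∈ B_L × {0,1}^{B_L} : η(x) = 1}, one has Σ_{x ∈ B_L} ⟨ |h − π^ℓ_L h(𝐌, x)|^{2p} · 1^ρ(𝐌) | x ⟩ ≤ C ℓ² Σ_{x ∈ B_L} Σ_{e ∈ 𝔹_L} ⟨ a_e ((h^e)^p − h^p)² | x ⟩. -/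

import Mathlib

open Finset
open scoped Classical

noncomputable section

/-- The box `B_ℓ = {−ℓ,…,ℓ}^d` in `ℤ^d`. -/
def Box (d ℓ : ℕ) : Finset (Fin d → ℤ) :=
  Finset.Icc (fun _ => -(ℓ : ℤ)) (fun _ => (ℓ : ℤ))

/-- A site of the box `B_L`. -/
abbrev Site (d L : ℕ) := {x : Fin d → ℤ // x ∈ Box d L}

/-- A particle configuration `η ∈ {0,1}^{B_L}`. -/
abbrev Config (d L : ℕ) := Site d L → Bool

/-- Two sites are neighbours when their Euclidean distance is `1`. -/
abbrev SiteAdj {d L : ℕ} (y z : Site d L) : Prop :=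
  (∑ i, ((y : Fin d → ℤ) i - (z : Fin d → ℤ) i) ^ 2) = 1

/-- The weight of the configuration `η` under the measure `⟨· | x⟩` on `{0,1}^{B_L}`,
under which `η(x) = 1` almost surely and `(η(y))_{y ≠ x}` are i.i.d. Bernoulli(ρ). -/
def tagWeight (d L : ℕ) (ρ : ℝ) (x : Site d L) (η : Config d L) : ℝ :=
  (if η x = true then 1 else 0) *
    ∏ y ∈ Finset.univ.erase x, (if η y then ρ else 1 - ρ)

/-- Expectation `⟨g | x⟩` with respect to the measure `⟨· | x⟩`. -/
def tagExp (d L : ℕ) (ρ : ℝ) (x : Site d L) (g : Config d L → ℝ) : ℝ :=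
  ∑ η : Config d L, tagWeight d L ρ x η * g η

/-- The translate `v + B_ℓ` of the box `B_ℓ`, viewed inside `B_L`. -/
def block (d L ℓ : ℕ) (v : Fin d → ℤ) : Finset (Site d L) :=
  Finset.univ.filter fun y => (y : Fin d → ℤ) - v ∈ Box d ℓ

/-- The number `M_i` of particles of `η` in the translate `v + B_ℓ` of `B_ℓ`. -/
def blockCount (d L ℓ : ℕ) (v : Fin d → ℤ) (η : Config d L) : ℕ :=
  ((block d L ℓ v).filter fun y => η y = true).card

/-- The event (appearing in the indicator `1^ρ(𝐌)`) that every block count `M_i`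
satisfies `(ρ/2)|B_ℓ| ≤ M_i ≤ ((ρ+1)/2)|B_ℓ|`. -/
def goodCounts (d L ℓ m : ℕ) (ρ : ℝ) (v : Fin m → Fin d → ℤ) (η : Config d L) : Prop :=
  ∀ i, ρ / 2 * ((Box d ℓ).card : ℝ) ≤ (blockCount d L ℓ (v i) η : ℝ) ∧
    (blockCount d L ℓ (v i) η : ℝ) ≤ (ρ + 1) / 2 * ((Box d ℓ).card : ℝ)

/-- The conditional expectation `⟨g | 𝐌 = M, y⟩` of `g` under `⟨· | y⟩` given that all
the block counts take the prescribed values `M = (M₁,…,M_m)`. -/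
def condExpCounts (d L ℓ m : ℕ) (ρ : ℝ) (v : Fin m → Fin d → ℤ) (y : Site d L)
    (M : Fin m → ℕ) (g : Config d L → ℝ) : ℝ :=
  tagExp d L ρ y (fun η => if ∀ i, blockCount d L ℓ (v i) η = M i then g η else 0) /
    tagExp d L ρ y (fun η => if ∀ i, blockCount d L ℓ (v i) η = M i then 1 else 0)

/-- The local average `π^ℓ_L h (M, x)` for `x` in the `i`-th block:
`|B_ℓ|⁻¹ Σ_{y ∈ B_{ℓ,i}} ⟨h | 𝐌 = M, y⟩`. -/
def piAvg (d L ℓ m : ℕ) (ρ : ℝ) (v : Fin m → Fin d → ℤ) (i : Fin m)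
    (M : Fin m → ℕ) (h : Site d L → Config d L → ℝ) : ℝ :=
  (((Box d ℓ).card : ℝ))⁻¹ *
    ∑ y ∈ block d L ℓ (v i), condExpCounts d L ℓ m ρ v y M (h y)

/-- A symmetric cost on pairs of sites obeying the relaxed triangle inequality satisfied by the
`L²` cost of a transposition. -/
structure IsSwapCost {S : Type*} (q : S → S → ℝ) : Prop where
  nonneg : ∀ s t, 0 ≤ q s t
  symm : ∀ s t, q s t = q t s
  self : ∀ s, q s s = 0
  tri : ∀ s t u, q s t ≤ 2 * q s u + q u t

theorem IsSwapCost.comp {S T : Type*} {q : S → S → ℝ} (hq : IsSwapCost q) (g : T → S) :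
    IsSwapCost (fun s t => q (g s) (g t)) :=
  ⟨fun _ _ => hq.nonneg _ _, fun _ _ => hq.symm _ _, fun _ => hq.self _,
    fun _ _ _ => hq.tri _ _ _⟩

theorem IsSwapCost.path {S : Type*} {q : S → S → ℝ} (hq : IsSwapCost q) (g : ℕ → S) (m : ℕ) :
    q (g 0) (g m) ≤ 2 * ∑ k ∈ range m, q (g k) (g (k + 1)) := by
  induction m with
  | zero => simp [hq.self]
  | succ m ih =>
    have h1 := hq.tri (g (m + 1)) (g 0) (g m)
    rw [hq.symm (g (m + 1)) (g 0), hq.symm (g (m + 1)) (g m), hq.symm (g m) (g 0)] at h1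
    rw [sum_range_succ]
    linarith

/-- Points of the discrete cube `{0,…,N}^d`. -/
abbrev Cube (d N : ℕ) := Fin d → Fin (N + 1)

/-- Nearest-neighbour relation in the cube. -/
abbrev CubeAdj {d N : ℕ} (s t : Cube d N) : Prop :=
  (∑ k, (((s k : ℕ) : ℤ) - ((t k : ℕ) : ℤ)) ^ 2) = 1

namespace Cube

variable {d N : ℕ}

/-- Replace the `k`-th coordinate of `u` by `c`, truncated to the cube. -/
def pt (u : Cube d N) (k : Fin d) (c : ℕ) : Cube d N :=
  Function.update u k ⟨min c N, by omega⟩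

/-- The next point in direction `k` (or the same point at the boundary). -/
def step (u : Cube d N) (k : Fin d) : Cube d N := pt u k (u k + 1)

theorem pt_pt (u : Cube d N) (k : Fin d) (c c' : ℕ) : pt (pt u k c) k c' = pt u k c' := by
  simp [pt]

theorem pt_same (u : Cube d N) (k : Fin d) (c : ℕ) : ((pt u k c) k : ℕ) = min c N := by
  simp [pt]

theorem step_pt (u : Cube d N) (k : Fin d) (c : ℕ) : step (pt u k c) k = pt u k (c + 1) := by
  unfold step
  rw [pt_pt, pt_same]
  unfold pt
  congr 2
  omega

theorem pt_self (u : Cube d N) (k : Fin d) : pt u k (u k) = u := by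
  unfold pt
  have : (⟨min (u k : ℕ) N, by omega⟩ : Fin (N + 1)) = u k := by
    ext; simp; omega
  rw [this, Function.update_eq_self]

theorem update_eq_pt (u : Cube d N) (k : Fin d) (c : Fin (N + 1)) :
    Function.update u k c = pt u k c := by
  unfold pt
  congr 1
  ext; simp; omega

theorem adj_update (u : Cube d N) (k : Fin d) (c : Fin (N + 1))
    (h : (c : ℕ) = u k + 1 ∨ (c : ℕ) + 1 = u k) : CubeAdj u (Function.update u k c) := by
  unfold CubeAdj
  rw [Finset.sum_eq_single k]
  · rw [Function.update_self]
    rcases h with h | h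
    · rw [h]; push_cast; ring
    · rw [← h]; push_cast; ring
  · intro b _ hb
    rw [Function.update_of_ne hb]; ring
  · simp

theorem adj_comm (s t : Cube d N) : CubeAdj s t ↔ CubeAdj t s := by
  unfold CubeAdj
  have : ∀ k, (((s k : ℕ) : ℤ) - ((t k : ℕ) : ℤ)) ^ 2 = (((t k : ℕ) : ℤ) - ((s k : ℕ) : ℤ)) ^ 2 :=
    fun k => by ring
  simp only [this]

theorem step_eq_or_adj (u : Cube d N) (k : Fin d) : step u k = u ∨ CubeAdj u (step u k) := by
  by_cases h : (u k : ℕ) = N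
  · left
    conv_rhs => rw [← pt_self u k]
    unfold step pt
    congr 2
    omega
  · right
    unfold step pt
    apply adj_update
    left
    have := (u k).2
    simp; omega

theorem line_cost {q : Cube d N → Cube d N → ℝ} (hq : IsSwapCost q) (u : Cube d N) (k : Fin d)
    {a b : ℕ} (hab : a ≤ b) :
    q (pt u k a) (pt u k b) ≤ 2 * ∑ c ∈ Ico a b, q (pt u k c) (step (pt u k c) k) := by
  have h := hq.path (fun j => pt u k (a + j)) (b - a)
  simp only [add_zero, Nat.add_sub_cancel' hab] at h
  rw [Finset.sum_Ico_eq_sum_range]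
  refine h.trans (le_of_eq ?_)
  simp only [step_pt, add_assoc]

/-- Interpolation between `s` and `t`: the first `k` coordinates are taken from `t`. -/
def mix (s t : Cube d N) (k : ℕ) : Cube d N := fun j => if (j : ℕ) < k then t j else s j

theorem mix_zero (s t : Cube d N) : mix s t 0 = s := by ext; simp [mix]

theorem mix_last (s t : Cube d N) : mix s t d = t := by ext; simp [mix]

theorem mix_mix (s t : Cube d N) (k : ℕ) : mix (mix s t k) (mix t s k) k = s := by
  ext j; simp only [mix]; split_ifs <;> rfl

theorem mix_eq_pt (s t : Cube d N) (k : Fin d) : mix s t k = pt (mix s t k) k (s k) := by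
  conv_lhs => rw [← pt_self (mix s t k) k]
  simp [mix]

theorem mix_succ (s t : Cube d N) (k : Fin d) :
    mix s t (k + 1) = pt (mix s t k) k (t k) := by
  rw [← update_eq_pt]
  ext j
  by_cases hj : j = k
  · subst hj; simp [mix]
  · have : (j : ℕ) ≠ k := fun h => hj (Fin.ext h)
    rw [Function.update_of_ne hj]
    simp only [mix]
    have h2 : (j : ℕ) < k + 1 ↔ (j : ℕ) < k := by omega
    simp [h2]

theorem cost_le_sum_mix {q : Cube d N → Cube d N → ℝ} (hq : IsSwapCost q) (s t : Cube d N) :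
    q s t ≤ 2 * ∑ k : Fin d, q (pt (mix s t k) k (s k)) (pt (mix s t k) k (t k)) := by
  have h := hq.path (fun k => mix s t k) d
  rw [mix_zero, mix_last, ← Fin.sum_univ_eq_sum_range (fun k =>
    q (mix s t k) (mix s t (k + 1)))] at h
  refine h.trans (le_of_eq ?_)
  congr 1
  refine Finset.sum_congr rfl fun k _ => ?_
  rw [mix_succ, ← mix_eq_pt]

theorem cost_le_of_step_le {q : Cube d N → Cube d N → ℝ} (hq : IsSwapCost q) {Q : ℝ}
    (hQ : ∀ s k, q s (step s k) ≤ Q) (s t : Cube d N) (R : ℕ)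
    (hR : ∀ k, (s k : ℕ) ≤ t k + R ∧ (t k : ℕ) ≤ s k + R) (hQ0 : 0 ≤ Q) :
    q s t ≤ 4 * d * R * Q := by
  have key : ∀ (u : Cube d N) (k : Fin d) (a b : ℕ), a ≤ b → b ≤ a + R →
      q (pt u k a) (pt u k b) ≤ 2 * (R * Q) := by
    intro u k a b hab hb
    refine (line_cost hq u k hab).trans ?_
    gcongr
    calc _ ≤ ∑ c ∈ Ico a b, Q := Finset.sum_le_sum fun c _ => hQ _ _
      _ = ((b - a : ℕ) : ℝ) * Q := by simp
      _ ≤ R * Q := by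
        gcongr
        omega
  refine (cost_le_sum_mix hq s t).trans ?_
  have : ∀ k : Fin d, q (pt (mix s t k) k (s k)) (pt (mix s t k) k (t k)) ≤ 2 * (R * Q) := by
    intro k
    rcases le_total (s k : ℕ) (t k) with h | h
    · exact key _ _ _ _ h (hR k).2
    · rw [hq.symm]; exact key _ _ _ _ h (hR k).1
  calc _ ≤ 2 * ∑ k : Fin d, 2 * (R * Q) := by gcongr with k; exact this k
    _ = _ := by simp; ring

theorem line_cost_sq {q : Cube d N → Cube d N → ℝ} (hq : IsSwapCost q) (u : Cube d N) (k : Fin d)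
    (a b : Fin (N + 1)) :
    q (pt u k a) (pt u k b) ^ 2 ≤
      4 * (N + 1) * ∑ c : Fin (N + 1),
        q (Function.update u k c) (step (Function.update u k c) k) ^ 2 := by
  wlog hab : a ≤ b generalizing a b
  · rw [hq.symm]; exact this b a (le_of_not_ge hab)
  have h1 := line_cost hq u k (a := a) (b := b) hab
  have h2 : ∑ c ∈ Ico (a : ℕ) b, q (pt u k c) (step (pt u k c) k) ≤
      ∑ c : Fin (N + 1), q (Function.update u k c) (step (Function.update u k c) k) := by
    simp only [update_eq_pt]
    rw [Fin.sum_univ_eq_sum_range (fun c => q (pt u k c) (step (pt u k c) k))]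
    refine Finset.sum_le_sum_of_subset_of_nonneg ?_ fun _ _ _ => hq.nonneg _ _
    intro c hc
    simp at hc ⊢
    omega
  have h3 := sq_sum_le_card_mul_sum_sq (s := (univ : Finset (Fin (N + 1))))
    (f := fun c => q (Function.update u k c) (step (Function.update u k c) k))
  have h0 := hq.nonneg (pt u k a) (pt u k b)
  have h4 : q (pt u k a) (pt u k b) ≤
    2 * ∑ c : Fin (N + 1), q (Function.update u k c) (step (Function.update u k c) k) := by linarith
  have h5 := pow_le_pow_left₀ h0 h4 2
  simp at h3
  nlinarith

theorem sum_update (k : Fin d) (F : Cube d N → ℝ) :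
    ∑ u : Cube d N, ∑ c : Fin (N + 1), F (Function.update u k c) = (N + 1) * ∑ u, F u := by
  rw [← Finset.sum_product', ]
  have : ∑ x ∈ (univ : Finset (Cube d N)) ×ˢ (univ : Finset (Fin (N + 1))),
      F (Function.update x.1 k x.2) =
        ∑ x ∈ (univ : Finset (Cube d N)) ×ˢ (univ : Finset (Fin (N + 1))), F x.1 := by
    refine Finset.sum_nbij' (fun x => (Function.update x.1 k x.2, x.1 k))
      (fun x => (Function.update x.1 k x.2, x.1 k)) ?_ ?_ ?_ ?_ ?_ <;> simp
  rw [this, Finset.sum_product]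
  simp [Finset.mul_sum]

theorem sum_mix (k : ℕ) (F : Cube d N → ℝ) :
    ∑ s : Cube d N, ∑ t : Cube d N, F (mix s t k) = (Fintype.card (Cube d N)) * ∑ u, F u := by
  rw [← Finset.sum_product']
  have : ∑ x ∈ (univ : Finset (Cube d N)) ×ˢ (univ : Finset (Cube d N)),
      F (mix x.1 x.2 k) =
        ∑ x ∈ (univ : Finset (Cube d N)) ×ˢ (univ : Finset (Cube d N)), F x.1 := by
    refine Finset.sum_nbij' (fun x => (mix x.1 x.2 k, mix x.2 x.1 k))
      (fun x => (mix x.1 x.2 k, mix x.2 x.1 k)) ?_ ?_ ?_ ?_ ?_ <;> simp [mix_mix]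
  rw [this, Finset.sum_product, Finset.mul_sum]
  simp

theorem poincare_step {q : Cube d N → Cube d N → ℝ} (hq : IsSwapCost q) :
    ∑ s, ∑ t, q s t ^ 2 ≤ 16 * d * (N + 1) ^ 2 * Fintype.card (Cube d N) *
      ∑ k : Fin d, ∑ s, q s (step s k) ^ 2 := by
  have h1 : ∀ s t, q s t ^ 2 ≤ 4 * d * ∑ k : Fin d, 4 * (N + 1) *
      ∑ c : Fin (N + 1), q (Function.update (mix s t k) k c)
        (step (Function.update (mix s t k) k c) k) ^ 2 := by
    intro s t
    have a1 := pow_le_pow_left₀ (hq.nonneg s t) (cost_le_sum_mix hq s t) 2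
    have a2 := sq_sum_le_card_mul_sum_sq (s := (univ : Finset (Fin d)))
      (f := fun k => q (pt (mix s t k) k (s k)) (pt (mix s t k) k (t k)))
    simp only [card_univ, Fintype.card_fin] at a2
    have a3 : ∑ k : Fin d, q (pt (mix s t k) k (s k)) (pt (mix s t k) k (t k)) ^ 2 ≤
        ∑ k : Fin d, 4 * (N + 1) * ∑ c : Fin (N + 1), q (Function.update (mix s t k) k c)
        (step (Function.update (mix s t k) k c) k) ^ 2 :=
      Finset.sum_le_sum fun k _ => line_cost_sq hq _ _ _ _
    have a4 := mul_le_mul_of_nonneg_left a3 (by positivity : (0 : ℝ) ≤ d)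
    rw [mul_pow] at a1
    linarith
  calc ∑ s, ∑ t, q s t ^ 2 ≤ ∑ s, ∑ t, 4 * d * ∑ k : Fin d, 4 * (N + 1) *
      ∑ c : Fin (N + 1), q (Function.update (mix s t k) k c)
        (step (Function.update (mix s t k) k c) k) ^ 2 :=
      Finset.sum_le_sum fun s _ => Finset.sum_le_sum fun t _ => h1 s t
    _ = ∑ k : Fin d, 16 * d * (N + 1) * ∑ s, ∑ t,
      ∑ c : Fin (N + 1), q (Function.update (mix s t k) k c)
        (step (Function.update (mix s t k) k c) k) ^ 2 := by
      simp only [Finset.mul_sum]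
      rw [Finset.sum_comm' (t' := univ) (s' := fun _ => univ) (by simp)]
      conv_lhs => enter [2, t]; rw [Finset.sum_comm]
      rw [Finset.sum_comm]
      refine Finset.sum_congr rfl fun k _ => ?_
      rw [Finset.sum_comm]
      refine Finset.sum_congr rfl fun s _ => Finset.sum_congr rfl fun t _ =>
        Finset.sum_congr rfl fun c _ => ?_
      ring
    _ = _ := by
      rw [Finset.mul_sum]
      refine Finset.sum_congr rfl fun k _ => ?_
      rw [sum_mix k (fun u => ∑ c : Fin (N + 1), q (Function.update u k c)
        (step (Function.update u k c) k) ^ 2),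
        sum_update k (fun u => q u (step u k) ^ 2)]
      ring

end Cube

namespace Cube

variable {d N : ℕ}

theorem cost_neighbors_of_ne {q : Cube d N → Cube d N → ℝ} (hq : IsSwapCost q) {x : Cube d N}
    {Q : ℝ} (hQ : ∀ s t, s ≠ x → t ≠ x → CubeAdj s t → q s t ≤ Q) {k k' : Fin d} (hk : k ≠ k')
    {a a' : Fin (N + 1)} (ha : (a : ℕ) = x k + 1 ∨ (a : ℕ) + 1 = x k)
    (ha' : (a' : ℕ) = x k' + 1 ∨ (a' : ℕ) + 1 = x k') :
    q (Function.update x k a) (Function.update x k' a') ≤ 3 * Q := by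
  have hne : ∀ (k : Fin d) (a : Fin (N + 1)) (y : Cube d N),
      ((a : ℕ) = x k + 1 ∨ (a : ℕ) + 1 = x k) → Function.update y k a ≠ x := by
    intro k a y ha h
    have := congrFun h k
    rw [Function.update_self] at this
    rw [this] at ha
    omega
  have hcomm := Function.update_comm hk a a' x
  have h1 : q (Function.update x k a) (Function.update (Function.update x k a) k' a') ≤ Q := by
    refine hQ _ _ (hne _ _ _ ha) (hne _ _ _ ha') (adj_update _ _ _ ?_)
    rwa [Function.update_of_ne hk.symm]
  have h2 : q (Function.update x k' a') (Function.update (Function.update x k' a') k a) ≤ Q := by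
    refine hQ _ _ (hne _ _ _ ha') (hne _ _ _ ha) (adj_update _ _ _ ?_)
    rwa [Function.update_of_ne hk]
  rw [← hcomm, hq.symm] at h2
  have := hq.tri (Function.update x k a) (Function.update x k' a')
    (Function.update (Function.update x k a) k' a')
  linarith

theorem exists_neighbor (hN : 1 ≤ N) (x : Cube d N) (k : Fin d) :
    ∃ a : Fin (N + 1), (a : ℕ) = x k + 1 ∨ (a : ℕ) + 1 = x k := by
  by_cases h : (x k : ℕ) = 0
  · exact ⟨⟨1, by omega⟩, Or.inl (by simp [h])⟩
  · have := (x k).2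
    exact ⟨⟨x k - 1, by omega⟩, Or.inr (by simp; omega)⟩

theorem cost_neighbors {q : Cube d N → Cube d N → ℝ} (hq : IsSwapCost q) {x : Cube d N}
    (hd : 2 ≤ d) (hN : 1 ≤ N)
    {Q : ℝ} (hQ : ∀ s t, s ≠ x → t ≠ x → CubeAdj s t → q s t ≤ Q) {k k' : Fin d}
    {a a' : Fin (N + 1)} (ha : (a : ℕ) = x k + 1 ∨ (a : ℕ) + 1 = x k)
    (ha' : (a' : ℕ) = x k' + 1 ∨ (a' : ℕ) + 1 = x k') (hQ0 : 0 ≤ Q) :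
    q (Function.update x k a) (Function.update x k' a') ≤ 9 * Q := by
  by_cases hk : k = k'
  · obtain ⟨l, hl⟩ : ∃ l : Fin d, l ≠ k := by
      have : Nontrivial (Fin d) := Fin.nontrivial_iff_two_le.2 hd
      exact exists_ne k
    obtain ⟨b, hb⟩ := exists_neighbor hN x l
    have h1 := cost_neighbors_of_ne hq hQ hl.symm ha hb
    have h2 := cost_neighbors_of_ne hq hQ (hk ▸ hl) hb ha'
    have := hq.tri (Function.update x k a) (Function.update x k' a') (Function.update x l b)
    linarith
  · have := cost_neighbors_of_ne hq hQ hk ha ha'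
    linarith

/-- The retraction of the cube that moves `x` to a point `y`. -/
def retract (x y : Cube d N) (s : Cube d N) : Cube d N := if s = x then y else s

theorem step_retract_le {q : Cube d N → Cube d N → ℝ} (hq : IsSwapCost q) {x : Cube d N}
    (hd : 2 ≤ d) (hN : 1 ≤ N)
    {Q : ℝ} (hQ : ∀ s t, s ≠ x → t ≠ x → CubeAdj s t → q s t ≤ Q) (hQ0 : 0 ≤ Q) {k : Fin d}
    {a : Fin (N + 1)} (ha : (a : ℕ) = x k + 1 ∨ (a : ℕ) + 1 = x k) (s : Cube d N) (l : Fin d) :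
    q (retract x (Function.update x k a) s) (retract x (Function.update x k a) (step s l))
      ≤ 9 * Q := by
  by_cases h : step s l = s
  · rw [h, hq.self]; positivity
  have hs : (s l : ℕ) < N := by
    by_contra hcon
    have h1 : (s l : ℕ) = N := by have := (s l).2; omega
    apply h
    conv_rhs => rw [← pt_self s l]
    unfold step pt
    congr 2
    omega
  have hst : step s l = Function.update s l ⟨s l + 1, by omega⟩ := by
    unfold step pt
    congr 2
    omega
  by_cases hsx : s = x
  · subst hsx
    rw [retract, if_pos rfl, retract, if_neg h, hst]
    exact cost_neighbors hq hd hN hQ ha (Or.inl rfl) hQ0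
  by_cases hsx' : step s l = x
  · rw [retract, if_neg hsx, retract, if_pos hsx', hq.symm]
    have h1 : s = Function.update x l ⟨s l, by omega⟩ := by
      rw [← hsx', hst]; simp
    conv_lhs => rw [h1]
    refine cost_neighbors hq hd hN hQ ha (Or.inr ?_) hQ0
    rw [← hsx', hst]; simp
  · rw [retract, if_neg hsx, retract, if_neg hsx']
    have := hQ s (step s l) hsx hsx' ((step_eq_or_adj s l).resolve_left h)
    linarith

theorem cost_le_of_adj_le {q : Cube d N → Cube d N → ℝ} (hq : IsSwapCost q) {x : Cube d N}
    (hd : 2 ≤ d) (hN : 1 ≤ N)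
    {Q : ℝ} (hQ : ∀ s t, s ≠ x → t ≠ x → CubeAdj s t → q s t ≤ Q) (hQ0 : 0 ≤ Q)
    {s t : Cube d N} (hs : s ≠ x) (ht : t ≠ x) (R : ℕ)
    (hR : ∀ k, (s k : ℕ) ≤ t k + R ∧ (t k : ℕ) ≤ s k + R) :
    q s t ≤ 36 * d * R * Q := by
  obtain ⟨a, ha⟩ := exists_neighbor hN x ⟨0, by omega⟩
  have := cost_le_of_step_le (hq.comp (retract x (Function.update x ⟨0, by omega⟩ a)))
    (Q := 9 * Q) (fun s k => step_retract_le hq hd hN hQ hQ0 ha s k) s t R hR (by positivity)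
  simp only [retract, if_neg hs, if_neg ht] at this
  linarith

theorem sum_step_le {q : Cube d N → Cube d N → ℝ} (hq : IsSwapCost q) (P : Cube d N → Prop)
    [DecidablePred P] :
    ∑ k : Fin d, ∑ s, (if P s ∧ P (step s k) then q s (step s k) ^ 2 else 0) ≤
      d * ∑ s, ∑ t, if P s ∧ P t ∧ CubeAdj s t then q s t ^ 2 else 0 := by
  calc _ ≤ ∑ k : Fin d, ∑ s, ∑ t, (if P s ∧ P t ∧ CubeAdj s t then q s t ^ 2 else 0) := by
        refine Finset.sum_le_sum fun k _ => Finset.sum_le_sum fun s _ => ?_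
        have hnn : ∀ t, 0 ≤ (if P s ∧ P t ∧ CubeAdj s t then q s t ^ 2 else 0) := by
          intro t; split_ifs <;> positivity
        refine le_trans ?_ (Finset.single_le_sum (fun t _ => hnn t) (mem_univ (step s k)))
        rcases step_eq_or_adj s k with h | h
        · rw [h, hq.self]
          simp
        · by_cases hP : P s ∧ P (step s k)
          · rw [if_pos hP, if_pos ⟨hP.1, hP.2, h⟩]
          · rw [if_neg hP]; exact hnn _
    _ = _ := by simp

theorem poincare {q : Cube d N → Cube d N → ℝ} (hq : IsSwapCost q) :
    ∑ s, ∑ t, q s t ^ 2 ≤ 16 * d ^ 2 * (N + 1) ^ 2 * Fintype.card (Cube d N) *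
      ∑ s, ∑ t, if CubeAdj s t then q s t ^ 2 else 0 := by
  refine (poincare_step hq).trans ?_
  have := sum_step_le hq (fun _ => True)
  simp only [true_and, and_self, if_true] at this
  calc _ ≤ 16 * d * (N + 1) ^ 2 * (Fintype.card (Cube d N) : ℝ) *
      (d * ∑ s, ∑ t, if CubeAdj s t then q s t ^ 2 else 0) := by gcongr
    _ = _ := by ring

theorem poincare_remove {q : Cube d N → Cube d N → ℝ} (hq : IsSwapCost q) (x : Cube d N)
    (hd : 2 ≤ d) (hN : 1 ≤ N) :
    ∑ s, ∑ t, (if s ≠ x ∧ t ≠ x then q s t ^ 2 else 0) ≤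
      2608 * d ^ 2 * (N + 1) ^ 2 * Fintype.card (Cube d N) *
      ∑ s, ∑ t, if s ≠ x ∧ t ≠ x ∧ CubeAdj s t then q s t ^ 2 else 0 := by
  obtain ⟨a, ha⟩ := exists_neighbor hN x ⟨0, by omega⟩
  set E := ∑ s, ∑ t, if s ≠ x ∧ t ≠ x ∧ CubeAdj s t then q s t ^ 2 else 0 with hE
  set y := Function.update x ⟨0, by omega⟩ a with hy
  have hnn : ∀ s t, 0 ≤ (if s ≠ x ∧ t ≠ x ∧ CubeAdj s t then q s t ^ 2 else 0) := by
    intro s t; split_ifs <;> positivity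
  have hE0 : 0 ≤ E := Finset.sum_nonneg fun s _ => Finset.sum_nonneg fun t _ => hnn s t
  have hQ : ∀ s t, s ≠ x → t ≠ x → CubeAdj s t → q s t ≤ Real.sqrt E := by
    intro s t hs ht hst
    apply Real.le_sqrt_of_sq_le
    have h1 := Finset.single_le_sum (fun t _ => hnn s t) (mem_univ t)
    have h2 := Finset.single_le_sum (f := fun s => ∑ t,
      if s ≠ x ∧ t ≠ x ∧ CubeAdj s t then q s t ^ 2 else 0)
      (fun s _ => Finset.sum_nonneg fun t _ => hnn s t) (mem_univ s)
    rw [if_pos ⟨hs, ht, hst⟩] at h1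
    exact h1.trans h2
  have hstep : ∀ s l, q (retract x y s) (retract x y (step s l)) ^ 2 ≤ 81 * E := by
    intro s l
    have := step_retract_le hq hd hN hQ (Real.sqrt_nonneg _) ha s l
    have h2 := pow_le_pow_left₀ (hq.nonneg _ _) this 2
    rw [mul_pow, Real.sq_sqrt hE0] at h2
    norm_num at h2
    exact h2
  have hterm : ∀ (k : Fin d) (s : Cube d N), q (retract x y s) (retract x y (step s k)) ^ 2 ≤
      (if s ≠ x ∧ step s k ≠ x then q s (step s k) ^ 2 else 0) +
      ((if s = x then 81 * E else 0) + (if s = pt x k (x k - 1) then 81 * E else 0)) := by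
    intro k s
    have e1 : 0 ≤ (if s = x then 81 * E else 0) := by split_ifs <;> positivity
    have e2 : 0 ≤ (if s = pt x k (x k - 1) then 81 * E else 0) := by split_ifs <;> positivity
    by_cases hs : s = x
    · rw [if_neg (by simp [hs]), if_pos hs]
      have := hstep s k
      linarith
    by_cases hs' : step s k = x
    · rw [if_neg (by simp [hs'])]
      have h3 : s = pt x k (x k - 1) := by
        have h4 : (s k : ℕ) < N := by
          by_contra hcon
          have h1 : (s k : ℕ) = N := by have := (s k).2; omega
          apply hs
          rw [← hs']
          conv_lhs => rw [← pt_self s k]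
          unfold step pt
          congr 2
          omega
        rw [← hs']
        unfold step
        rw [pt_pt, pt_same]
        conv_lhs => rw [← pt_self s k]
        congr 1
        omega
      rw [if_pos h3]
      have := hstep s k
      linarith
    · rw [if_pos ⟨hs, hs'⟩]
      simp only [retract, if_neg hs, if_neg hs']
      linarith
  have hsum : ∑ k : Fin d, ∑ s, q (retract x y s) (retract x y (step s k)) ^ 2 ≤ 163 * d * E := by
    calc _ ≤ ∑ k : Fin d, ∑ s, ((if s ≠ x ∧ step s k ≠ x then q s (step s k) ^ 2 else 0) +
      ((if s = x then 81 * E else 0) + (if s = pt x k (x k - 1) then 81 * E else 0))) :=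
          Finset.sum_le_sum fun k _ => Finset.sum_le_sum fun s _ => hterm k s
      _ = ∑ k : Fin d, ∑ s, (if s ≠ x ∧ step s k ≠ x then q s (step s k) ^ 2 else 0) +
          d * (162 * E) := by
          simp only [Finset.sum_add_distrib, Finset.sum_ite_eq', mem_univ, if_true]
          simp
          ring
      _ ≤ d * E + d * (162 * E) := by
          gcongr
          exact sum_step_le hq (fun s => s ≠ x)
      _ = _ := by ring
  calc _ ≤ ∑ s, ∑ t, q (retract x y s) (retract x y t) ^ 2 := by
        refine Finset.sum_le_sum fun s _ => Finset.sum_le_sum fun t _ => ?_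
        split_ifs with h
        · simp [retract, h.1, h.2]
        · positivity
    _ ≤ _ := poincare_step (hq.comp (retract x y))
    _ ≤ 16 * d * (N + 1) ^ 2 * Fintype.card (Cube d N) * (163 * d * E) := by
        gcongr
    _ = _ := by ring

end Cube

namespace Cube

variable {d N : ℕ}

/-- The sup-norm distance in the cube. -/
def supDist (x w : Cube d N) : ℕ := univ.sup fun k => ((x k : ℕ) - w k) + ((w k : ℕ) - x k)

theorem le_supDist (x w : Cube d N) (k : Fin d) :
    (x k : ℕ) ≤ w k + supDist x w ∧ (w k : ℕ) ≤ x k + supDist x w := by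
  have := Finset.le_sup (f := fun k => ((x k : ℕ) - w k) + ((w k : ℕ) - x k)) (mem_univ k)
  change _ ≤ supDist x w at this
  omega

theorem card_supDist_eq_le (x : Cube d N) (j : ℕ) :
    (univ.filter fun w => supDist x w = j).card ≤ (2 * j + 1) ^ d := by
  have hsub : (univ.filter fun w => supDist x w = j) ⊆ Fintype.piFinset
      (fun k => univ.filter fun c : Fin (N + 1) => (x k : ℕ) ≤ c + j ∧ (c : ℕ) ≤ x k + j) := by
    intro w hw
    simp only [mem_filter, mem_univ, true_and] at hw
    simp only [Fintype.mem_piFinset, mem_filter, mem_univ, true_and]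
    intro k
    rw [← hw]
    exact le_supDist x w k
  refine (card_le_card hsub).trans ?_
  rw [Fintype.card_piFinset]
  calc _ ≤ ∏ _k : Fin d, (2 * j + 1) := by
        refine Finset.prod_le_prod' fun k _ => ?_
        have : ((univ.filter fun c : Fin (N + 1) => (x k : ℕ) ≤ c + j ∧ (c : ℕ) ≤ x k + j).map
            Fin.valEmbedding) ⊆ Icc ((x k : ℕ) - j) (x k + j) := by
          intro c hc
          simp only [mem_map, mem_filter, mem_univ, true_and, Fin.valEmbedding_apply] at hc
          obtain ⟨b, hb, rfl⟩ := hc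
          rw [mem_Icc]; omega
        have h2 := card_le_card this
        rw [card_map, Nat.card_Icc] at h2
        omega
    _ = _ := by simp

theorem supDist_le_card (x w : Cube d N) :
    supDist x w ≤ (univ.filter fun u => supDist x u < supDist x w).card := by
  by_cases h0 : supDist x w = 0
  · omega
  have hne : (univ : Finset (Fin d)).Nonempty := by
    by_contra h
    rw [not_nonempty_iff_eq_empty] at h
    apply h0
    unfold supDist
    rw [h]; simp
  obtain ⟨k, _, hk⟩ := Finset.exists_mem_eq_sup _ hne
    (fun k => ((x k : ℕ) - w k) + ((w k : ℕ) - x k))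
  change supDist x w = _ at hk
  have hx := (x k).2
  have hw := (w k).2
  have hpt : ∀ c : ℕ, c ≤ N → supDist x (pt x k c) = ((x k : ℕ) - c) + (c - x k) := by
    intro c hc
    apply le_antisymm
    · refine Finset.sup_le fun l _ => ?_
      by_cases hl : l = k
      · subst hl
        rw [pt_same, min_eq_left hc]
      · simp [pt, Function.update_of_ne hl]
    · have := Finset.le_sup (f := fun l => ((x l : ℕ) - pt x k c l) + ((pt x k c l : ℕ) - x l))
        (mem_univ k)
      rw [pt_same, min_eq_left hc] at this
      exact this
  have hinj : Set.InjOn (fun c : ℕ => pt x k c) (range (N + 1)) := by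
    intro a ha b hb hab
    simp at ha hb
    have h1 := congrArg (fun u : Cube d N => (u k : ℕ)) hab
    simp only [pt_same] at h1
    omega
  set D := supDist x w with hD
  rcases le_total (x k : ℕ) (w k) with h | h
  · have hsub : (Ico (x k : ℕ) (w k)).image (fun c => pt x k c) ⊆
        univ.filter fun u => supDist x u < D := by
      intro u hu
      rw [mem_image] at hu
      obtain ⟨c, hc, rfl⟩ := hu
      rw [mem_Ico] at hc
      simp only [mem_filter, mem_univ, true_and]
      rw [hpt c (by omega)]
      omega
    have := card_le_card hsub
    rw [card_image_of_injOn (hinj.mono (by intro c; simp; omega)), Nat.card_Ico] at this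
    omega
  · have hsub : (Ioc (w k : ℕ) (x k)).image (fun c => pt x k c) ⊆
        univ.filter fun u => supDist x u < D := by
      intro u hu
      rw [mem_image] at hu
      obtain ⟨c, hc, rfl⟩ := hu
      rw [mem_Ioc] at hc
      simp only [mem_filter, mem_univ, true_and]
      rw [hpt c (by omega)]
      omega
    have := card_le_card hsub
    rw [card_image_of_injOn (hinj.mono (by intro c; simp; omega)), Nat.card_Ioc] at this
    omega

theorem exists_sum_geometric_le (d : ℕ) {β : ℝ} (h0 : 0 ≤ β) (h1 : β < 1) :
    ∃ C : ℝ, 0 ≤ C ∧ ∀ (N : ℕ) (x : Cube d N),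
      ∑ w, (supDist x w + 1 : ℝ) * β ^ supDist x w ≤ C := by
  set g : ℕ → ℝ := fun j => (2 * j + 1) ^ d * ((j + 1) * β ^ j) with hg
  have hg0 : ∀ j, 0 ≤ g j := fun j => by positivity
  have hsum : Summable g := by
    have hs : Summable fun j : ℕ => (3 : ℝ) ^ d * 2 * ((j : ℝ) ^ (d + 1) * β ^ j) :=
      (summable_pow_mul_geometric_of_norm_lt_one (d + 1)
        (by rwa [Real.norm_of_nonneg h0] : ‖β‖ < 1)).mul_left _
    rw [← summable_nat_add_iff 1] at hs ⊢
    refine Summable.of_nonneg_of_le (fun j => hg0 _) (fun j => ?_) hs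
    simp only [hg]
    push_cast
    have e1 : (2 * ((j : ℝ) + 1) + 1) ^ d ≤ (3 * (j + 1)) ^ d := by
      gcongr
      have : (0 : ℝ) ≤ j := by positivity
      linarith
    have e2 : ((j : ℝ) + 1 + 1) ≤ 2 * (j + 1) := by
      have : (0 : ℝ) ≤ j := by positivity
      linarith
    calc (2 * ((j : ℝ) + 1) + 1) ^ d * ((j + 1 + 1) * β ^ (j + 1))
        ≤ (3 * (j + 1)) ^ d * ((2 * (j + 1)) * β ^ (j + 1)) := by gcongr
      _ = _ := by rw [mul_pow]; ring
  refine ⟨∑' j, g j, tsum_nonneg hg0, fun N x => ?_⟩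
  have hle : ∀ w : Cube d N, supDist x w ∈ range (N + 1) := by
    intro w
    rw [mem_range, Nat.lt_succ_iff]
    refine Finset.sup_le fun k _ => ?_
    have := (x k).2
    have := (w k).2
    omega
  rw [← Finset.sum_fiberwise_of_maps_to (t := range (N + 1)) (g := supDist x) (fun w _ => hle w)]
  refine le_trans (Finset.sum_le_sum fun j _ => ?_)
    (hsum.sum_le_tsum (range (N + 1)) fun j _ => hg0 j)
  calc _ = ∑ w ∈ univ.filter (fun w => supDist x w = j), ((j : ℝ) + 1) * β ^ j := by
        refine Finset.sum_congr rfl fun w hw => ?_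
        rw [(mem_filter.1 hw).2]
    _ = ((univ.filter fun w => supDist x w = j).card : ℝ) * (((j : ℝ) + 1) * β ^ j) := by simp
    _ ≤ _ := by
        simp only [hg]
        gcongr
        exact_mod_cast card_supDist_eq_le x j

end Cube

section PermAverage

variable {S : Type*} [Fintype S] [DecidableEq S]

/-- The permutations moving only points of `W`. -/
def permsOn (W : Finset S) : Finset (Equiv.Perm S) := univ.filter fun σ => ∀ v, v ∉ W → σ v = v

theorem mem_permsOn {W : Finset S} {σ : Equiv.Perm S} :
    σ ∈ permsOn W ↔ ∀ v, v ∉ W → σ v = v := by simp [permsOn]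

theorem one_mem_permsOn (W : Finset S) : 1 ∈ permsOn W := by simp [mem_permsOn]

theorem mul_mem_permsOn {W : Finset S} {σ τ : Equiv.Perm S} (hσ : σ ∈ permsOn W)
    (hτ : τ ∈ permsOn W) : σ * τ ∈ permsOn W := by
  rw [mem_permsOn] at *
  intro v hv
  rw [Equiv.Perm.mul_apply, hτ v hv, hσ v hv]

theorem inv_mem_permsOn {W : Finset S} {σ : Equiv.Perm S} (hσ : σ ∈ permsOn W) :
    σ⁻¹ ∈ permsOn W := by
  rw [mem_permsOn] at *
  intro v hv
  rw [Equiv.Perm.inv_eq_iff_eq, hσ v hv]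

theorem swap_mem_permsOn {W : Finset S} {s t : S} (hs : s ∈ W) (ht : t ∈ W) :
    Equiv.swap s t ∈ permsOn W := by
  rw [mem_permsOn]
  intro v hv
  exact Equiv.swap_apply_of_ne_of_ne (fun h => hv (h ▸ hs)) (fun h => hv (h ▸ ht))

theorem permsOn_mono {W W' : Finset S} (h : W ⊆ W') : permsOn W ⊆ permsOn W' := by
  intro σ hσ
  rw [mem_permsOn] at *
  exact fun v hv => hσ v fun hv' => hv (h hv')

theorem apply_mem_of_mem_permsOn {W : Finset S} {σ : Equiv.Perm S} (hσ : σ ∈ permsOn W) {v : S}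
    (hv : v ∈ W) : σ v ∈ W := by
  by_contra h
  have h1 := mem_permsOn.1 hσ _ h
  have := σ.injective h1
  rw [this] at h
  exact h hv

theorem permsOn_card_pos (W : Finset S) : (0 : ℝ) < (permsOn W).card := by
  exact_mod_cast Finset.card_pos.2 ⟨1, one_mem_permsOn W⟩

variable {E : Type*} [NormedAddCommGroup E] [InnerProductSpace ℝ E]
  (ρ : Equiv.Perm S →* (E ≃ₗᵢ[ℝ] E))

/-- The average of a vector over the permutations moving only points of `W`. -/
def permAvg (W : Finset S) (f : E) : E := ((permsOn W).card : ℝ)⁻¹ • ∑ σ ∈ permsOn W, ρ σ f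

theorem apply_permAvg {W : Finset S} {τ : Equiv.Perm S} (hτ : τ ∈ permsOn W) (f : E) :
    ρ τ (permAvg ρ W f) = permAvg ρ W f := by
  unfold permAvg
  rw [map_smul, map_sum]
  congr 1
  refine Finset.sum_nbij' (fun σ => τ * σ) (fun σ => τ⁻¹ * σ)
    (fun σ hσ => mul_mem_permsOn hτ hσ) (fun σ hσ => mul_mem_permsOn (inv_mem_permsOn hτ) hσ)
    ?_ ?_ ?_ <;> simp

theorem permAvg_apply {W : Finset S} {τ : Equiv.Perm S} (hτ : τ ∈ permsOn W) (f : E) :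
    permAvg ρ W (ρ τ f) = permAvg ρ W f := by
  unfold permAvg
  congr 1
  refine Finset.sum_nbij' (fun σ => σ * τ) (fun σ => σ * τ⁻¹)
    (fun σ hσ => mul_mem_permsOn hσ hτ) (fun σ hσ => mul_mem_permsOn hσ (inv_mem_permsOn hτ))
    ?_ ?_ ?_ <;> simp

theorem permAvg_of_invariant {W : Finset S} {f : E} (hf : ∀ σ ∈ permsOn W, ρ σ f = f) :
    permAvg ρ W f = f := by
  unfold permAvg
  rw [Finset.sum_congr rfl hf, Finset.sum_const, ← Nat.cast_smul_eq_nsmul ℝ, smul_smul,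
    inv_mul_cancel₀ (permsOn_card_pos W).ne', one_smul]

theorem permAvg_sub (W : Finset S) (f g : E) :
    permAvg ρ W (f - g) = permAvg ρ W f - permAvg ρ W g := by
  simp [permAvg, Finset.sum_sub_distrib, smul_sub]

theorem permAvg_permAvg {W W' : Finset S} (h : W' ⊆ W) (f : E) :
    permAvg ρ W (permAvg ρ W' f) = permAvg ρ W f := by
  have : permAvg ρ W (permAvg ρ W' f) =
      ((permsOn W').card : ℝ)⁻¹ • ∑ σ ∈ permsOn W', permAvg ρ W (ρ σ f) := by
    simp only [permAvg, map_smul, map_sum]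
    rw [← Finset.smul_sum, ← Finset.smul_sum, smul_comm, Finset.sum_comm]
  rw [this, Finset.sum_congr rfl fun σ hσ => permAvg_apply ρ (permsOn_mono h hσ) f,
    Finset.sum_const, ← Nat.cast_smul_eq_nsmul ℝ, smul_smul,
    inv_mul_cancel₀ (permsOn_card_pos W').ne', one_smul]

theorem rep_mul_apply (σ τ : Equiv.Perm S) (f : E) : ρ (σ * τ) f = ρ σ (ρ τ f) := by
  rw [map_mul]; rfl

theorem inner_rep (σ : Equiv.Perm S) (f g : E) : inner ℝ (ρ σ f) g = inner ℝ f (ρ σ⁻¹ g) := by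
  have h := (ρ σ).inner_map_map f (ρ σ⁻¹ g)
  rw [← h, ← rep_mul_apply]
  simp

theorem inner_permAvg (W : Finset S) (f g : E) :
    inner ℝ (permAvg ρ W f) g = inner ℝ f (permAvg ρ W g) := by
  unfold permAvg
  rw [real_inner_smul_left, real_inner_smul_right, sum_inner, inner_sum]
  congr 1
  refine Finset.sum_nbij' (fun σ => σ⁻¹) (fun σ => σ⁻¹)
    (fun σ hσ => inv_mem_permsOn hσ) (fun σ hσ => inv_mem_permsOn hσ) ?_ ?_ ?_
  · simp
  · simp
  · intro σ _
    exact inner_rep ρ σ f g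

theorem norm_sub_sq_permAvg {W : Finset S} (f : E) {g : E}
    (hg : ∀ σ ∈ permsOn W, ρ σ g = g) :
    ‖f - g‖ ^ 2 = ‖f - permAvg ρ W f‖ ^ 2 + ‖permAvg ρ W f - g‖ ^ 2 := by
  have h0 : inner ℝ (f - permAvg ρ W f) (permAvg ρ W f - g) = 0 := by
    have hv : permAvg ρ W (permAvg ρ W f - g) = permAvg ρ W f - g := by
      rw [permAvg_sub, permAvg_permAvg ρ (Finset.Subset.refl W), permAvg_of_invariant ρ hg]
    rw [inner_sub_left, inner_permAvg, hv, sub_self]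
  have : f - g = (f - permAvg ρ W f) + (permAvg ρ W f - g) := by abel
  rw [this, norm_add_sq_real, h0]
  ring

theorem norm_permAvg_le (W : Finset S) (f : E) : ‖permAvg ρ W f‖ ≤ ‖f‖ := by
  unfold permAvg
  rw [norm_smul, norm_inv, Real.norm_of_nonneg (permsOn_card_pos W).le,
    inv_mul_le_iff₀ (permsOn_card_pos W)]
  refine (norm_sum_le _ _).trans ?_
  simp

theorem rep_swap_conj (σ : Equiv.Perm S) (s t : S) (f : E) :
    ‖ρ (Equiv.swap s t) (ρ σ f) - ρ σ f‖ = ‖ρ (Equiv.swap (σ⁻¹ s) (σ⁻¹ t)) f - f‖ := by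
  rw [Equiv.swap_apply_apply, inv_inv, rep_mul_apply, rep_mul_apply,
    ← (ρ σ).norm_map (ρ σ⁻¹ _ - f), map_sub, ← rep_mul_apply ρ σ σ⁻¹, mul_inv_cancel, map_one]
  rfl

theorem isSwapCost_rep (f : E) : IsSwapCost fun s t => ‖ρ (Equiv.swap s t) f - f‖ where
  nonneg _ _ := norm_nonneg _
  symm s t := by rw [Equiv.swap_comm]
  self s := by
    rw [Equiv.swap_self]
    change ‖ρ 1 f - f‖ = 0
    simp
  tri s t u := by
    by_cases hsu : s = u
    · subst hsu
      have := norm_nonneg (ρ (Equiv.swap s s) f - f)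
      linarith
    by_cases hut : u = t
    · subst hut
      have := norm_nonneg (ρ (Equiv.swap s u) f - f)
      have := norm_nonneg (ρ (Equiv.swap u u) f - f)
      linarith
    by_cases hst : s = t
    · subst hst
      rw [Equiv.swap_self]
      change ‖ρ 1 f - f‖ ≤ _
      simp
      positivity
    have h1 : Equiv.swap s t = Equiv.swap u s * Equiv.swap u t * Equiv.swap u s := by
      ext v
      simp only [Equiv.Perm.mul_apply, Equiv.swap_apply_def]
      grind
    simp only [h1, Equiv.swap_comm s u]
    set a := ρ (Equiv.swap u s)
    set b := ρ (Equiv.swap u t)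
    have h2 : ρ (Equiv.swap u s * Equiv.swap u t * Equiv.swap u s) f - f =
        a (b (a f - f)) + a (b f - f) + (a f - f) := by
      simp only [rep_mul_apply, map_sub, a, b]
      abel
    rw [h2]
    refine (norm_add₃_le).trans ?_
    rw [LinearIsometryEquiv.norm_map, LinearIsometryEquiv.norm_map, LinearIsometryEquiv.norm_map]
    linarith

theorem sum_swap_permAvg_le (W : Finset S) (s : S) (f : E) :
    ∑ t ∈ W, ‖ρ (Equiv.swap s t) (permAvg ρ (W.erase s) f) - permAvg ρ (W.erase s) f‖ ^ 2 ≤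
      ∑ t ∈ W, ‖ρ (Equiv.swap s t) f - f‖ ^ 2 := by
  set H := permsOn (W.erase s) with hH
  have hc : (0 : ℝ) < H.card := permsOn_card_pos _
  have h1 : ∀ t ∈ W, ‖ρ (Equiv.swap s t) (permAvg ρ (W.erase s) f) - permAvg ρ (W.erase s) f‖ ^ 2 ≤
      (H.card : ℝ)⁻¹ * ∑ σ ∈ H, ‖ρ (Equiv.swap s (σ⁻¹ t)) f - f‖ ^ 2 := by
    intro t _
    have e1 : ρ (Equiv.swap s t) (permAvg ρ (W.erase s) f) - permAvg ρ (W.erase s) f =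
        (H.card : ℝ)⁻¹ • ∑ σ ∈ H, (ρ (Equiv.swap s t) (ρ σ f) - ρ σ f) := by
      unfold permAvg
      rw [map_smul, map_sum, ← smul_sub, Finset.sum_sub_distrib]
    have e2 : ‖∑ σ ∈ H, (ρ (Equiv.swap s t) (ρ σ f) - ρ σ f)‖ ≤
        ∑ σ ∈ H, ‖ρ (Equiv.swap s (σ⁻¹ t)) f - f‖ := by
      refine (norm_sum_le _ _).trans (Finset.sum_le_sum fun σ hσ => ?_)
      rw [rep_swap_conj]
      have : σ⁻¹ s = s := mem_permsOn.1 (inv_mem_permsOn hσ) s (by simp)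
      rw [this]
    have e3 := sq_sum_le_card_mul_sum_sq (s := H)
      (f := fun σ => ‖ρ (Equiv.swap s (σ⁻¹ t)) f - f‖)
    have e4 := pow_le_pow_left₀ (norm_nonneg _) e2 2
    rw [e1, norm_smul, mul_pow, norm_inv, Real.norm_of_nonneg hc.le]
    calc _ ≤ ((H.card : ℝ)⁻¹) ^ 2 * (H.card * ∑ σ ∈ H, ‖ρ (Equiv.swap s (σ⁻¹ t)) f - f‖ ^ 2) := by
          gcongr
          exact e4.trans e3
      _ = _ := by field_simp
  refine (Finset.sum_le_sum h1).trans ?_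
  rw [← Finset.mul_sum, Finset.sum_comm]
  have h2 : ∀ σ ∈ H, ∑ t ∈ W, ‖ρ (Equiv.swap s (σ⁻¹ t)) f - f‖ ^ 2 =
      ∑ t ∈ W, ‖ρ (Equiv.swap s t) f - f‖ ^ 2 := by
    intro σ hσ
    have hσ' := permsOn_mono (Finset.erase_subset s W) hσ
    refine Finset.sum_nbij' (fun t => σ⁻¹ t) (fun t => σ t)
      (fun t ht => apply_mem_of_mem_permsOn (inv_mem_permsOn hσ') ht)
      (fun t ht => apply_mem_of_mem_permsOn hσ' ht) ?_ ?_ ?_ <;> simp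
  rw [Finset.sum_congr rfl h2, Finset.sum_const, nsmul_eq_mul, ← mul_assoc,
    inv_mul_cancel₀ hc.ne', one_mul]

theorem permAvg_eq_coset_avg {W : Finset S} {s : S} (hs : s ∈ W) {g : E}
    (hg : ∀ σ ∈ permsOn (W.erase s), ρ σ g = g) :
    permAvg ρ W g = (W.card : ℝ)⁻¹ • ∑ t ∈ W, ρ (Equiv.swap s t) g := by
  have hW : (0 : ℝ) < W.card := by exact_mod_cast Finset.card_pos.2 ⟨s, hs⟩
  set P := (W.card : ℝ)⁻¹ • ∑ t ∈ W, ρ (Equiv.swap s t) g with hP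
  have hinv : ∀ σ ∈ permsOn W, ρ σ P = P := by
    intro σ hσ
    rw [hP, map_smul, map_sum]
    congr 1
    refine Finset.sum_nbij' (fun t => σ t) (fun t => σ⁻¹ t)
      (fun t ht => apply_mem_of_mem_permsOn hσ ht)
      (fun t ht => apply_mem_of_mem_permsOn (inv_mem_permsOn hσ) ht) (by simp) (by simp) ?_
    intro t ht
    set τ := (Equiv.swap s (σ t))⁻¹ * σ * Equiv.swap s t with hτ
    have hτmem : τ ∈ permsOn (W.erase s) := by
      rw [mem_permsOn]
      intro v hv
      by_cases hvs : v = s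
      · subst hvs
        simp [hτ]
      · have hvW : v ∉ W := fun h => hv (Finset.mem_erase.2 ⟨hvs, h⟩)
        have : τ ∈ permsOn W := mul_mem_permsOn (mul_mem_permsOn (inv_mem_permsOn
          (swap_mem_permsOn hs (apply_mem_of_mem_permsOn hσ ht))) hσ) (swap_mem_permsOn hs ht)
        exact mem_permsOn.1 this v hvW
    have h1 : σ * Equiv.swap s t = Equiv.swap s (σ t) * τ := by
      rw [hτ]; group
    rw [← rep_mul_apply, h1, rep_mul_apply,
      hg τ hτmem]
  have h2 : permAvg ρ W P = permAvg ρ W g := by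
    have : permAvg ρ W P = (W.card : ℝ)⁻¹ • ∑ t ∈ W, permAvg ρ W (ρ (Equiv.swap s t) g) := by
      simp only [hP, permAvg, map_smul, map_sum]
      rw [← Finset.smul_sum, ← Finset.smul_sum, smul_comm, Finset.sum_comm]
    rw [this, Finset.sum_congr rfl fun t ht => permAvg_apply ρ (swap_mem_permsOn hs ht) g,
      Finset.sum_const, ← Nat.cast_smul_eq_nsmul ℝ, smul_smul, inv_mul_cancel₀ hW.ne', one_smul]
  rw [← h2, permAvg_of_invariant ρ hinv]

theorem norm_sub_permAvg_erase {W : Finset S} {s : S} (hs : s ∈ W) (f : E) :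
    2 * (W.card : ℝ) * ‖permAvg ρ (W.erase s) f - permAvg ρ W f‖ ^ 2 ≤
      ∑ t ∈ W, ‖ρ (Equiv.swap s t) f - f‖ ^ 2 := by
  have hW : (0 : ℝ) < W.card := by exact_mod_cast Finset.card_pos.2 ⟨s, hs⟩
  refine le_trans (le_of_eq ?_) (sum_swap_permAvg_le ρ W s f)
  rw [← permAvg_permAvg ρ (Finset.erase_subset s W) f]
  set g := permAvg ρ (W.erase s) f with hg
  have hginv : ∀ σ ∈ permsOn (W.erase s), ρ σ g = g := fun σ hσ => apply_permAvg ρ hσ f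
  have h1 : ‖g - permAvg ρ W g‖ ^ 2 = ‖g‖ ^ 2 - inner ℝ g (permAvg ρ W g) := by
    have : inner ℝ (permAvg ρ W g) (permAvg ρ W g) = inner ℝ g (permAvg ρ W g) := by
      rw [inner_permAvg, permAvg_permAvg ρ (Finset.Subset.refl W)]
    rw [norm_sub_sq_real, ← real_inner_self_eq_norm_sq (permAvg ρ W g), this]
    ring
  have h2 : ∀ t, ‖ρ (Equiv.swap s t) g - g‖ ^ 2 =
      2 * ‖g‖ ^ 2 - 2 * inner ℝ g (ρ (Equiv.swap s t) g) := by
    intro t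
    rw [norm_sub_sq_real, LinearIsometryEquiv.norm_map, real_inner_comm]
    ring
  rw [h1, permAvg_eq_coset_avg ρ hs hginv, real_inner_smul_right, inner_sum]
  simp only [h2]
  rw [Finset.sum_sub_distrib, ← Finset.mul_sum, ← Finset.mul_sum, Finset.sum_const, nsmul_eq_mul]
  field_simp

/-- Spectral gap of the complete-graph transposition walk, in an arbitrary isometric
representation of the symmetric group. -/
theorem card_mul_norm_sub_permAvg_le (f : E) (n : ℕ) : ∀ W : Finset S, W.card = n →
    (n : ℝ) * ‖f - permAvg ρ W f‖ ^ 2 ≤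
      ∑ s ∈ W, ∑ t ∈ W, ‖ρ (Equiv.swap s t) f - f‖ ^ 2 := by
  have hq := isSwapCost_rep ρ f
  induction n with
  | zero =>
    intro W _
    simp only [Nat.cast_zero, zero_mul]
    positivity
  | succ n ih =>
    intro W hW
    set D : S → S → ℝ := fun s t => ‖ρ (Equiv.swap s t) f - f‖ ^ 2 with hD
    have hDs : ∀ s t, D s t = D t s := fun s t => by simp only [hD]; rw [Equiv.swap_comm]
    have hD0 : ∀ s, D s s = 0 := fun s => by
      have : ‖ρ (Equiv.swap s s) f - f‖ = 0 := hq.self s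
      simp only [hD, this]; norm_num
    have hDnn : ∀ s t, 0 ≤ D s t := fun s t => by positivity
    set T := ∑ s ∈ W, ∑ t ∈ W, D s t with hT
    have hTnn : 0 ≤ T := Finset.sum_nonneg fun s _ => Finset.sum_nonneg fun t _ => hDnn s t
    set X := ‖f - permAvg ρ W f‖ ^ 2 with hX
    change ((n + 1 : ℕ) : ℝ) * X ≤ T
    rcases Nat.eq_zero_or_pos n with hn | hn
    · subst hn
      obtain ⟨s, rfl⟩ := Finset.card_eq_one.1 hW
      have h1 : permAvg ρ {s} f = f := by
        apply permAvg_of_invariant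
        intro σ hσ
        have : σ = 1 := by
          ext v
          by_cases hv : v = s
          · subst hv
            have := apply_mem_of_mem_permsOn hσ (Finset.mem_singleton_self v)
            simpa using this
          · exact mem_permsOn.1 hσ v (by simpa using hv)
        rw [this]; simp
      rw [hX, h1]
      simpa using hTnn
    have hterm : ∀ s ∈ W, (n : ℝ) * X ≤ (T - 2 * ∑ t ∈ W, D s t) +
        n / (2 * (n + 1)) * ∑ t ∈ W, D s t := by
      intro s hs
      have e1 : X = ‖f - permAvg ρ (W.erase s) f‖ ^ 2 +
          ‖permAvg ρ (W.erase s) f - permAvg ρ W f‖ ^ 2 :=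
        norm_sub_sq_permAvg ρ f fun σ hσ =>
          apply_permAvg ρ (permsOn_mono (Finset.erase_subset s W) hσ) f
      have e2 := ih (W.erase s) (by rw [Finset.card_erase_of_mem hs, hW]; rfl)
      have e3 := norm_sub_permAvg_erase ρ hs f
      rw [hW] at e3
      push_cast at e3
      have e4 : ∑ a ∈ W.erase s, ∑ b ∈ W.erase s, D a b = T - 2 * ∑ t ∈ W, D s t := by
        have : ∀ a, ∑ b ∈ W.erase s, D a b = (∑ b ∈ W, D a b) - D a s := fun a => by
          rw [← Finset.sum_erase_add W _ hs]; ring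
        simp only [this]
        rw [Finset.sum_sub_distrib]
        have h5 : ∑ a ∈ W.erase s, ∑ b ∈ W, D a b = T - ∑ b ∈ W, D s b := by
          rw [hT, ← Finset.sum_erase_add W _ hs]; ring
        have h6 : ∑ a ∈ W.erase s, D a s = ∑ b ∈ W, D s b := by
          rw [← Finset.sum_erase_add W _ hs, hD0, add_zero]
          exact Finset.sum_congr rfl fun a _ => hDs a s
        rw [h5, h6]; ring
      rw [← e4, e1, mul_add]
      refine add_le_add e2 ?_
      have h7 : (0 : ℝ) < 2 * (n + 1) := by positivity
      rw [div_mul_eq_mul_div, le_div_iff₀ h7]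
      have h8 : (0 : ℝ) ≤ n := by positivity
      nlinarith
    have hsum := Finset.sum_le_sum hterm
    simp only [Finset.sum_add_distrib, Finset.sum_sub_distrib, ← Finset.mul_sum,
      Finset.sum_const, hW, nsmul_eq_mul] at hsum
    change _ ≤ ((n + 1 : ℕ) : ℝ) * T - 2 * T + n / (2 * (n + 1)) * T at hsum
    have hn' : (0 : ℝ) < n := by exact_mod_cast hn
    have h9 : (n : ℝ) / (2 * (n + 1)) * T ≤ 1 * T := by
      gcongr
      rw [div_le_one (by positivity)]
      linarith
    push_cast at hsum ⊢
    refine le_of_mul_le_mul_left ?_ hn'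
    linarith

theorem exists_invariant_norm_sub_sq_le {ι : Type*} (W : ι → Finset S)
    (hdisj : ∀ i j, i ≠ j → Disjoint (W i) (W j)) (u : E) (J : Finset ι) :
    ∃ g : E, (∀ j ∈ J, ∀ σ ∈ permsOn (W j), ρ σ g = g) ∧
      ‖u - g‖ ^ 2 ≤ ∑ j ∈ J, ‖u - permAvg ρ (W j) u‖ ^ 2 := by
  induction J using Finset.induction_on with
  | empty => exact ⟨u, by simp, by simp⟩
  | insert i J hi ih =>
    obtain ⟨g, hg, hle⟩ := ih
    refine ⟨permAvg ρ (W i) g, ?_, ?_⟩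
    · intro j hj σ hσ
      rcases Finset.mem_insert.1 hj with rfl | hj
      · exact apply_permAvg ρ hσ g
      · have hij : i ≠ j := fun h => hi (h ▸ hj)
        unfold permAvg
        rw [map_smul, map_sum]
        congr 1
        refine Finset.sum_congr rfl fun τ hτ => ?_
        have hcomm : σ * τ = τ * σ := by
          refine (Equiv.Perm.Disjoint.commute fun v => ?_)
          by_cases hv : v ∈ W i
          · left
            exact mem_permsOn.1 hσ v (Finset.disjoint_left.1 (hdisj i j hij) hv)
          · right
            exact mem_permsOn.1 hτ v hv
        rw [← rep_mul_apply, hcomm, rep_mul_apply, hg j hj σ hσ]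
    · rw [Finset.sum_insert hi, norm_sub_sq_permAvg ρ u fun σ hσ => apply_permAvg ρ hσ g]
      gcongr
      rw [← permAvg_sub]
      exact (pow_le_pow_left₀ (norm_nonneg _) (norm_permAvg_le ρ _ _) 2).trans hle

end PermAverage

section Sector

variable {S ι : Type*} [Fintype S] [DecidableEq S]

/-- The number of particles of `η` in `B`. -/
def particles (B : Finset S) (η : S → Bool) : ℕ := (B.filter fun y => η y = true).card

/-- Configurations with a particle at `x` and `M j` particles in each `blk j`. -/
def sector (blk : ι → Finset S) (M : ι → ℕ) (x : S) : Finset (S → Bool) :=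
  univ.filter fun η => η x = true ∧ ∀ j, particles (blk j) η = M j

theorem mem_sector {blk : ι → Finset S} {M : ι → ℕ} {x : S} {η : S → Bool} :
    η ∈ sector blk M x ↔ η x = true ∧ ∀ j, particles (blk j) η = M j := by
  simp [sector]

theorem particles_comp_perm {B : Finset S} (η : S → Bool) {σ : Equiv.Perm S}
    (hσ : ∀ y, σ y ∈ B ↔ y ∈ B) : particles B (η ∘ σ) = particles B η := by
  unfold particles
  refine Finset.card_bij' (fun y _ => σ y) (fun y _ => σ.symm y) ?_ ?_ ?_ ?_
  · intro y hy
    simp only [mem_filter, Function.comp] at hy ⊢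
    exact ⟨(hσ y).2 hy.1, hy.2⟩
  · intro y hy
    simp only [mem_filter, Function.comp] at hy ⊢
    refine ⟨(hσ _).1 (by simpa using hy.1), by simpa using hy.2⟩
  · simp
  · simp

theorem perm_apply_mem_iff {B W : Finset S} (h : W ⊆ B ∨ Disjoint W B) {σ : Equiv.Perm S}
    (hσ : σ ∈ permsOn W) (y : S) : σ y ∈ B ↔ y ∈ B := by
  by_cases hy : y ∈ W
  · have h1 := apply_mem_of_mem_permsOn hσ hy
    rcases h with h | h
    · exact ⟨fun _ => h hy, fun _ => h h1⟩
    · exact ⟨fun h2 => absurd h2 (Finset.disjoint_left.1 h h1),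
        fun h2 => absurd h2 (Finset.disjoint_left.1 h hy)⟩
  · rw [mem_permsOn.1 hσ y hy]

theorem comp_mem_sector {blk : ι → Finset S} (hdisj : ∀ i j, i ≠ j → Disjoint (blk i) (blk j))
    {M : ι → ℕ} {x z : S} {η : S → Bool} {j : ι} {σ : Equiv.Perm S} (hσ : σ ∈ permsOn (blk j))
    (hz : σ z = x) (hη : η ∈ sector blk M x) : η ∘ σ ∈ sector blk M z := by
  rw [mem_sector] at *
  refine ⟨by simpa [hz] using hη.1, fun i => ?_⟩
  rw [particles_comp_perm η (perm_apply_mem_iff ?_ hσ), hη.2 i]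
  by_cases hij : j = i
  · exact Or.inl (hij ▸ Finset.Subset.refl _)
  · exact Or.inr (hdisj j i hij)

theorem sum_sector_comp {blk : ι → Finset S} (hdisj : ∀ i j, i ≠ j → Disjoint (blk i) (blk j))
    (M : ι → ℕ) {x z : S} {j : ι} {σ : Equiv.Perm S} (hσ : σ ∈ permsOn (blk j))
    (hz : σ z = x) (g : (S → Bool) → ℝ) :
    ∑ η ∈ sector blk M x, g (η ∘ σ) = ∑ η ∈ sector blk M z, g η := by
  refine Finset.sum_nbij' (fun η => η ∘ σ) (fun η => η ∘ (σ⁻¹ : Equiv.Perm S))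
    (fun η hη => comp_mem_sector hdisj hσ hz hη)
    (fun η hη => comp_mem_sector hdisj (inv_mem_permsOn hσ) (by simp [← hz]) hη) ?_ ?_ ?_
  · intro η _; ext v; simp
  · intro η _; ext v; simp
  · intro η _; rfl

theorem eq_of_particles_eq {T : Type*} {W : ι → Finset S} {g : (S → Bool) → T}
    (hg : ∀ j, ∀ s ∈ W j, ∀ t ∈ W j, ∀ η, g (η ∘ Equiv.swap s t) = g η) (k : ℕ) :
    ∀ η η' : S → Bool, (univ.filter fun v => η v ≠ η' v).card = k →
    (∀ j, particles (W j) η = particles (W j) η') → (∀ v, η v ≠ η' v → ∃ j, v ∈ W j) →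
    (∀ i j, i ≠ j → Disjoint (W i) (W j)) → g η = g η' := by
  induction k using Nat.strong_induction_on with
  | _ k ih =>
    intro η η' hk hcnt hcov hdisj
    by_cases h0 : ∀ v, η v = η' v
    · rw [show η = η' from funext h0]
    · push Not at h0
      obtain ⟨v, hv⟩ := h0
      obtain ⟨j, hj⟩ := hcov v hv
      have hex : ∃ s ∈ W j, ∃ t ∈ W j,
          (η s = true ∧ η' s = false) ∧ (η t = false ∧ η' t = true) := by
        set A := (W j).filter fun y => η y = true with hA
        set A' := (W j).filter fun y => η' y = true with hA'
        have hAA : A.card = A'.card := hcnt j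
        have h1 : (A \ A').card = (A' \ A).card := by
          have e1 := Finset.card_sdiff_add_card_inter A A'
          have e2 := Finset.card_sdiff_add_card_inter A' A
          rw [Finset.inter_comm A' A] at e2
          omega
        have hm : ∀ s, s ∈ A \ A' ↔ s ∈ W j ∧ η s = true ∧ η' s = false := by
          intro s
          simp only [hA, hA', mem_sdiff, mem_filter]
          cases η s <;> cases η' s <;> simp
        have hm' : ∀ s, s ∈ A' \ A ↔ s ∈ W j ∧ η s = false ∧ η' s = true := by
          intro s
          simp only [hA, hA', mem_sdiff, mem_filter]
          cases η s <;> cases η' s <;> simp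
        have hpos : 0 < (A \ A').card := by
          cases hv1 : η v with
          | true =>
            refine Finset.card_pos.2 ⟨v, (hm v).2 ⟨hj, hv1, ?_⟩⟩
            rw [hv1] at hv
            cases h2 : η' v <;> simp_all
          | false =>
            rw [h1]
            refine Finset.card_pos.2 ⟨v, (hm' v).2 ⟨hj, hv1, ?_⟩⟩
            rw [hv1] at hv
            cases h2 : η' v <;> simp_all
        obtain ⟨s, hs⟩ := Finset.card_pos.1 hpos
        obtain ⟨t, ht⟩ := Finset.card_pos.1 (h1 ▸ hpos)
        have hs := (hm s).1 hs
        have ht := (hm' t).1 ht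
        exact ⟨s, hs.1, t, ht.1, hs.2, ht.2⟩
      obtain ⟨s, hs, t, ht, ⟨hs1, hs2⟩, ht1, ht2⟩ := hex
      have hst : s ≠ t := fun h => by rw [h, ht1] at hs1; cases hs1
      have hsub : ∀ y, (η ∘ Equiv.swap s t) y ≠ η' y → η y ≠ η' y ∧ y ≠ s := by
        intro y hy
        simp only [Function.comp] at hy
        by_cases hys : y = s
        · subst hys; simp [ht1, hs2] at hy
        · by_cases hyt : y = t
          · subst hyt; simp [hs1, ht2] at hy
          · rw [Equiv.swap_apply_of_ne_of_ne hys hyt] at hy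
            exact ⟨hy, hys⟩
      rw [← hg j s hs t ht η]
      refine ih _ ?_ (η ∘ Equiv.swap s t) η' rfl ?_ (fun y hy => hcov y (hsub y hy).1) hdisj
      · rw [← hk]
        refine Finset.card_lt_card (Finset.ssubset_iff_subset_ne.2 ⟨?_, ?_⟩)
        · intro y hy
          simp only [mem_filter, mem_univ, true_and] at hy ⊢
          exact (hsub y hy).1
        · intro heq
          have : s ∈ univ.filter fun v => η v ≠ η' v := by simp [hs1, hs2]
          rw [← heq] at this
          simp only [mem_filter, mem_univ, true_and] at this
          exact (hsub s this).2 rfl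
      · intro i
        rw [← hcnt i]
        refine particles_comp_perm η (perm_apply_mem_iff (W := W j) ?_ (swap_mem_permsOn hs ht))
        by_cases hij : j = i
        · exact Or.inl (hij ▸ Finset.Subset.refl _)
        · exact Or.inr (hdisj j i hij)

/-- The action of permutations of sites on functions of the configuration. -/
def configRep (S : Type*) [Fintype S] [DecidableEq S] :
    Equiv.Perm S →* (EuclideanSpace ℝ (S → Bool) ≃ₗᵢ[ℝ] EuclideanSpace ℝ (S → Bool)) where
  toFun σ := LinearIsometryEquiv.piLpCongrLeft 2 ℝ ℝ
    ⟨fun η => η ∘ (σ⁻¹ : Equiv.Perm S), fun η => η ∘ σ, fun η => by ext; simp,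
      fun η => by ext; simp⟩
  map_one' := by
    ext u η
    simp [LinearIsometryEquiv.piLpCongrLeft_apply, Equiv.piCongrLeft']
  map_mul' σ τ := by
    ext u η
    simp [LinearIsometryEquiv.piLpCongrLeft_apply, Equiv.piCongrLeft', LinearIsometryEquiv.mul_def]
    rfl

theorem configRep_apply (σ : Equiv.Perm S) (u : EuclideanSpace ℝ (S → Bool)) (η : S → Bool) :
    configRep S σ u η = u (η ∘ σ) := by
  simp [configRep, LinearIsometryEquiv.piLpCongrLeft_apply, Equiv.piCongrLeft']

/-- The restriction of `F` to a sector, as a Euclidean vector. -/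
def sectorVector (blk : ι → Finset S) (M : ι → ℕ) (x : S) (F : (S → Bool) → ℝ) :
    EuclideanSpace ℝ (S → Bool) :=
  WithLp.toLp 2 fun η => if η ∈ sector blk M x then F η else 0

theorem sectorVector_apply (blk : ι → Finset S) (M : ι → ℕ) (x : S) (F : (S → Bool) → ℝ)
    (η : S → Bool) :
    sectorVector blk M x F η = if η ∈ sector blk M x then F η else 0 := rfl

theorem swap_comp_mem_sector_iff {blk : ι → Finset S}
    (hdisj : ∀ i j, i ≠ j → Disjoint (blk i) (blk j)) {M : ι → ℕ} {x : S} {j : ι} {s t : S}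
    (hs : s ∈ (blk j).erase x) (ht : t ∈ (blk j).erase x) (η : S → Bool) :
    η ∘ Equiv.swap s t ∈ sector blk M x ↔ η ∈ sector blk M x := by
  have hσ := swap_mem_permsOn (Finset.mem_of_mem_erase hs) (Finset.mem_of_mem_erase ht)
  have hx : Equiv.swap s t x = x := Equiv.swap_apply_of_ne_of_ne
    (Finset.ne_of_mem_erase hs).symm (Finset.ne_of_mem_erase ht).symm
  refine ⟨fun h => ?_, fun h => comp_mem_sector hdisj hσ hx h⟩
  have := comp_mem_sector hdisj hσ hx h
  convert this using 1
  ext v; simp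

theorem norm_swap_sectorVector {blk : ι → Finset S}
    (hdisj : ∀ i j, i ≠ j → Disjoint (blk i) (blk j)) (M : ι → ℕ) (x : S)
    (F : (S → Bool) → ℝ) {j : ι} {s t : S}
    (hs : s ∈ (blk j).erase x) (ht : t ∈ (blk j).erase x) :
    ‖configRep S (Equiv.swap s t) (sectorVector blk M x F) - sectorVector blk M x F‖ ^ 2 =
      ∑ η ∈ sector blk M x, (F (η ∘ Equiv.swap s t) - F η) ^ 2 := by
  have hmem := swap_comp_mem_sector_iff hdisj (M := M) hs ht
  rw [EuclideanSpace.norm_sq_eq, ← Finset.sum_filter_add_sum_filter_not univ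
    (fun η => η ∈ sector blk M x)]
  have h0 : ∑ η with η ∉ sector blk M x,
      ‖(configRep S (Equiv.swap s t) (sectorVector blk M x F) - sectorVector blk M x F) η‖ ^ 2
        = 0 := by
    refine Finset.sum_eq_zero fun η hη => ?_
    simp only [mem_filter, mem_univ, true_and] at hη
    rw [PiLp.sub_apply, configRep_apply, sectorVector_apply, sectorVector_apply,
      if_neg (mt (hmem η).1 hη), if_neg hη]
    simp
  rw [h0, add_zero, Finset.filter_univ_mem]
  refine Finset.sum_congr rfl fun η hη => ?_
  rw [PiLp.sub_apply, configRep_apply, sectorVector_apply, sectorVector_apply,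
    if_pos ((hmem η).2 hη), if_pos hη, Real.norm_eq_abs, sq_abs]

theorem exists_sum_sector_sub_sq_le {blk : ι → Finset S} [Fintype ι]
    (hdisj : ∀ i j, i ≠ j → Disjoint (blk i) (blk j)) (hcov : ∀ v, ∃ j, v ∈ blk j)
    (M : ι → ℕ) (x : S) (F : (S → Bool) → ℝ) {K : ℝ}
    (E : ι → ℝ)
    (hK : ∀ j, ∀ q : S → S → ℝ, IsSwapCost q →
      (∀ s ∈ (blk j).erase x, ∀ t ∈ (blk j).erase x, q s t ^ 2 =
        ∑ η ∈ sector blk M x, (F (η ∘ Equiv.swap s t) - F η) ^ 2) →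
      ∑ s ∈ (blk j).erase x, ∑ t ∈ (blk j).erase x, q s t ^ 2 ≤
        K * ((blk j).erase x).card * E j) (hne : ∀ j, ((blk j).erase x).Nonempty) :
    ∃ c, ∑ η ∈ sector blk M x, (F η - c) ^ 2 ≤ K * ∑ j, E j := by
  set W : ι → Finset S := fun j => (blk j).erase x with hW
  have hWdisj : ∀ i j, i ≠ j → Disjoint (W i) (W j) := fun i j hij =>
    (hdisj i j hij).mono (Finset.erase_subset _ _) (Finset.erase_subset _ _)
  set u := sectorVector blk M x F with hu
  have hux : ∀ η, u η = if η ∈ sector blk M x then F η else 0 := fun η => rfl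
  have hnorm : ∀ j, ∀ s ∈ W j, ∀ t ∈ W j, ‖configRep S (Equiv.swap s t) u - u‖ ^ 2 =
      ∑ η ∈ sector blk M x, (F (η ∘ Equiv.swap s t) - F η) ^ 2 :=
    fun j s hs t ht => norm_swap_sectorVector hdisj M x F hs ht
  obtain ⟨g, hg, hle⟩ := exists_invariant_norm_sub_sq_le (configRep S) W hWdisj u univ
  have hconst : ∃ c, ∀ η ∈ sector blk M x, g η = c := by
    by_cases hemp : (sector blk M x).Nonempty
    · obtain ⟨η₀, h₀⟩ := hemp
      refine ⟨g η₀, fun η hη => ?_⟩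
      rw [mem_sector] at h₀ hη
      refine eq_of_particles_eq (W := W) (g := fun η => g η) ?_ _ η η₀ rfl ?_ ?_ hWdisj
      · intro j s hs t ht ζ
        have := hg j (mem_univ _) (Equiv.swap s t) (swap_mem_permsOn hs ht)
        rw [← configRep_apply, this]
      · intro j
        have key : ∀ ζ : S → Bool, ζ x = true →
            particles (W j) ζ + (if x ∈ blk j then 1 else 0) = particles (blk j) ζ := by
          intro ζ hζ
          unfold particles
          rw [hW]
          simp only
          rw [Finset.filter_erase]
          split_ifs with hx
          · exact Finset.card_erase_add_one (by simp [hx, hζ])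
          · rw [Finset.erase_eq_of_notMem (by simp [hx])]; rfl
        have e1 := key η hη.1
        have e2 := key η₀ h₀.1
        rw [hη.2 j] at e1
        rw [h₀.2 j] at e2
        omega
      · intro v hv
        obtain ⟨j, hj⟩ := hcov v
        refine ⟨j, Finset.mem_erase.2 ⟨?_, hj⟩⟩
        rintro rfl
        exact hv (hη.1.trans h₀.1.symm)
    · rw [Finset.not_nonempty_iff_eq_empty] at hemp
      exact ⟨0, by simp [hemp]⟩
  obtain ⟨c, hc⟩ := hconst
  refine ⟨c, ?_⟩
  have h1 : ∑ η ∈ sector blk M x, (F η - c) ^ 2 ≤ ‖u - g‖ ^ 2 := by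
    rw [EuclideanSpace.norm_sq_eq]
    calc _ = ∑ η ∈ sector blk M x, ‖(u - g) η‖ ^ 2 := by
          refine Finset.sum_congr rfl fun η hη => ?_
          rw [PiLp.sub_apply, hux, if_pos hη, hc η hη, Real.norm_eq_abs, sq_abs]
      _ ≤ _ := Finset.sum_le_sum_of_subset_of_nonneg (Finset.subset_univ _)
          fun _ _ _ => by positivity
  refine (h1.trans hle).trans ?_
  rw [Finset.mul_sum]
  refine Finset.sum_le_sum fun j _ => ?_
  have h2 := card_mul_norm_sub_permAvg_le (configRep S) u _ (W j) rfl
  have h3 := hK j _ (isSwapCost_rep (configRep S) u) (hnorm j)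
  have h4 : (0 : ℝ) < (W j).card := by exact_mod_cast Finset.card_pos.2 (hne j)
  refine le_of_mul_le_mul_left ?_ h4
  calc _ ≤ _ := h2.trans h3
    _ = _ := by ring

end Sector

/-- A partition of the sites into blocks, each being charted by a discrete cube whose edges are
edges of the site graph. -/
structure IsBlockPartition {S ι : Type*} [DecidableEq S] {d N : ℕ} (adj : S → S → Prop)
    (blk : ι → Finset S) (φ : ι → Cube d N → S) : Prop where
  image : ∀ i, univ.image (φ i) = blk i
  inj : ∀ i, Function.Injective (φ i)
  adj : ∀ i s t, CubeAdj s t → adj (φ i s) (φ i t)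
  disj : ∀ i j, i ≠ j → Disjoint (blk i) (blk j)
  cover : ∀ v, ∃ j, v ∈ blk j

section

variable {S ι : Type*} [DecidableEq S] {d N : ℕ} {adj : S → S → Prop}
    {blk : ι → Finset S} {φ : ι → Cube d N → S}

namespace IsBlockPartition

theorem mem (h : IsBlockPartition adj blk φ) (i : ι) (s : Cube d N) : φ i s ∈ blk i := by
  rw [← h.image]; simp

theorem card_blk (h : IsBlockPartition adj blk φ) (i : ι) :
    (blk i).card = Fintype.card (Cube d N) := by
  rw [← h.image, Finset.card_image_of_injective _ (h.inj i), Finset.card_univ]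

theorem sum_blk (h : IsBlockPartition adj blk φ) (i : ι) (g : S → ℝ) :
    ∑ s ∈ blk i, g s = ∑ s, g (φ i s) := by
  rw [← h.image, Finset.sum_image fun a _ b _ hab => h.inj i hab]

theorem sum_erase (h : IsBlockPartition adj blk φ) (i : ι) (x : S) (g : S → ℝ) :
    ∑ s ∈ (blk i).erase x, g s = ∑ s, if φ i s ≠ x then g (φ i s) else 0 := by
  rw [← h.sum_blk i (fun s => if s ≠ x then g s else 0), ← Finset.sum_filter]
  congr 1
  ext s; simp [and_comm]

theorem poincare_erase (h : IsBlockPartition adj blk φ) (hd : 2 ≤ d) (hN : 1 ≤ N) (i : ι) (x : S)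
    {q : S → S → ℝ} (hq : IsSwapCost q) :
    ∑ s ∈ (blk i).erase x, ∑ t ∈ (blk i).erase x, q s t ^ 2 ≤
      2608 * d ^ 2 * (N + 1) ^ 2 * Fintype.card (Cube d N) *
        ∑ s ∈ (blk i).erase x, ∑ t ∈ (blk i).erase x, if adj s t then q s t ^ 2 else 0 := by
  have hmono : ∀ P : Cube d N → Prop, (∀ s, P s ↔ φ i s ≠ x) →
      ∑ s, ∑ t, (if P s ∧ P t ∧ CubeAdj s t then q (φ i s) (φ i t) ^ 2 else 0) ≤
      ∑ s ∈ (blk i).erase x, ∑ t ∈ (blk i).erase x, if adj s t then q s t ^ 2 else 0 := by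
    intro P hP
    simp only [h.sum_erase i x]
    refine Finset.sum_le_sum fun s _ => ?_
    by_cases hs : φ i s ≠ x
    · rw [if_pos hs]
      refine Finset.sum_le_sum fun t _ => ?_
      rw [hP, hP]
      by_cases ht : φ i t ≠ x
      · rw [if_pos ht]
        by_cases hst : CubeAdj s t
        · rw [if_pos ⟨hs, ht, hst⟩, if_pos (h.adj i s t hst)]
        · rw [if_neg (by tauto)]
          split_ifs <;> positivity
      · rw [if_neg ht, if_neg (by tauto)]
    · rw [if_neg hs]
      refine Finset.sum_nonpos fun t _ => ?_
      rw [if_neg (by rw [hP]; tauto)]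
  have hl : ∑ s ∈ (blk i).erase x, ∑ t ∈ (blk i).erase x, q s t ^ 2 =
      ∑ s, ∑ t, (if φ i s ≠ x ∧ φ i t ≠ x then q (φ i s) (φ i t) ^ 2 else 0) := by
    simp only [h.sum_erase i x]
    refine Finset.sum_congr rfl fun s _ => ?_
    by_cases hs : φ i s ≠ x
    · simp only [hs, true_and, ne_eq, not_false_eq_true, if_true]
    · simp only [hs, false_and, if_false, Finset.sum_const_zero]
  rw [hl]
  by_cases hx : ∃ u, φ i u = x
  · obtain ⟨u, rfl⟩ := hx
    have hP : ∀ s, s ≠ u ↔ φ i s ≠ φ i u := fun s => (h.inj i).ne_iff.symm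
    have h1 := Cube.poincare_remove (hq.comp (φ i)) u hd hN
    refine le_trans (le_of_eq ?_) (h1.trans ?_)
    · simp only [hP]
    · gcongr
      refine le_trans (le_of_eq ?_) (hmono (fun s => s ≠ u) hP)
      exact Finset.sum_congr rfl fun s _ => Finset.sum_congr rfl fun t _ => by congr
  · push Not at hx
    have h1 := Cube.poincare (hq.comp (φ i))
    have h2 := hmono (fun _ => True) (fun s => by simp [hx s])
    simp only [true_and] at h2
    simp only [ne_eq, hx, not_false_eq_true, and_self, if_true]
    refine h1.trans ?_
    have h3 : (0 : ℝ) ≤ ∑ s, ∑ t : Cube d N, if CubeAdj s t then q (φ i s) (φ i t) ^ 2 else 0 := by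
      positivity
    gcongr
    norm_num

theorem poincare_blk (h : IsBlockPartition adj blk φ) (i : ι) {q : S → S → ℝ}
    (hq : IsSwapCost q) :
    ∑ s ∈ blk i, ∑ t ∈ blk i, q s t ^ 2 ≤
      16 * d ^ 2 * (N + 1) ^ 2 * Fintype.card (Cube d N) *
        ∑ s, ∑ t, if CubeAdj s t then q (φ i s) (φ i t) ^ 2 else 0 := by
  simp only [h.sum_blk i]
  exact Cube.poincare (hq.comp (φ i))

theorem two_le_card (hd : 2 ≤ d) (hN : 1 ≤ N) : 2 ≤ Fintype.card (Cube d N) := by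
  simp only [Fintype.card_pi, Fintype.card_fin, Finset.prod_const, Finset.card_univ]
  calc 2 ≤ N + 1 := by omega
    _ = (N + 1) ^ 1 := (pow_one _).symm
    _ ≤ _ := Nat.pow_le_pow_right (by omega) (by omega)

theorem card_le_two_mul_card_erase (h : IsBlockPartition adj blk φ) (hd : 2 ≤ d) (hN : 1 ≤ N)
    (i : ι) (x : S) : Fintype.card (Cube d N) ≤ 2 * ((blk i).erase x).card := by
  have h1 := h.card_blk i
  have h2 := two_le_card (d := d) (N := N) hd hN
  have h3 := Finset.pred_card_le_card_erase (s := blk i) (a := x)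
  omega

end IsBlockPartition

end

section

variable {S ι : Type*} [Fintype S] [DecidableEq S] {d N : ℕ} {adj : S → S → Prop}
    {blk : ι → Finset S} {φ : ι → Cube d N → S}

/-- The Dirichlet energy, in a sector with tag at `x`, of the swaps along edges of `blk j` that
avoid the tag. -/
def fixedTagEnergy (adj : S → S → Prop) (blk : ι → Finset S) (M : ι → ℕ) (x : S) (j : ι)
    (F : (S → Bool) → ℝ) : ℝ :=
  ∑ s ∈ (blk j).erase x, ∑ t ∈ (blk j).erase x,
    if adj s t then ∑ η ∈ sector blk M x, (F (η ∘ Equiv.swap s t) - F η) ^ 2 else 0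

theorem fixedTagEnergy_nonneg (M : ι → ℕ) (x : S) (j : ι) (F : (S → Bool) → ℝ) :
    0 ≤ fixedTagEnergy adj blk M x j F := by
  unfold fixedTagEnergy
  positivity

theorem le_fixedTagEnergy (M : ι → ℕ) {x : S} {j : ι} (F : (S → Bool) → ℝ) {s t : S}
    (hs : s ∈ (blk j).erase x) (ht : t ∈ (blk j).erase x) (hst : adj s t) :
    ∑ η ∈ sector blk M x, (F (η ∘ Equiv.swap s t) - F η) ^ 2 ≤
      fixedTagEnergy adj blk M x j F := by
  unfold fixedTagEnergy
  set G : S → S → ℝ := fun s t =>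
    if adj s t then ∑ η ∈ sector blk M x, (F (η ∘ Equiv.swap s t) - F η) ^ 2 else 0 with hG
  have hnn : ∀ s t, 0 ≤ G s t := fun s t => by simp only [hG]; positivity
  calc _ = G s t := by simp only [hG, if_pos hst]
    _ ≤ ∑ t ∈ (blk j).erase x, G s t :=
      Finset.single_le_sum (f := fun t => G s t) (fun t _ => hnn s t) ht
    _ ≤ ∑ s ∈ (blk j).erase x, ∑ t ∈ (blk j).erase x, G s t :=
      Finset.single_le_sum (f := fun s => ∑ t ∈ (blk j).erase x, G s t)
        (fun s _ => Finset.sum_nonneg fun t _ => hnn s t) hs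

theorem IsBlockPartition.exists_sum_sector_le [Fintype ι] (h : IsBlockPartition adj blk φ)
    (hd : 2 ≤ d) (hN : 1 ≤ N) (M : ι → ℕ) (x : S) (F : (S → Bool) → ℝ) :
    ∃ c, ∑ η ∈ sector blk M x, (F η - c) ^ 2 ≤
      5216 * d ^ 2 * (N + 1) ^ 2 * ∑ j, fixedTagEnergy adj blk M x j F := by
  refine exists_sum_sector_sub_sq_le h.disj h.cover M x F _ ?_ ?_
  · intro j q hq hqe
    have h1 := h.poincare_erase hd hN j x hq
    have h2 : ∑ s ∈ (blk j).erase x, ∑ t ∈ (blk j).erase x, (if adj s t then q s t ^ 2 else 0) =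
        fixedTagEnergy adj blk M x j F := by
      unfold fixedTagEnergy
      refine Finset.sum_congr rfl fun s hs => Finset.sum_congr rfl fun t ht => ?_
      rw [hqe s hs t ht]
    rw [h2] at h1
    refine h1.trans ?_
    have h3 : (Fintype.card (Cube d N) : ℝ) ≤ 2 * ((blk j).erase x).card := by
      exact_mod_cast h.card_le_two_mul_card_erase hd hN j x
    have h4 := fixedTagEnergy_nonneg (adj := adj) (blk := blk) M x j F
    calc _ ≤ 2608 * (d : ℝ) ^ 2 * (N + 1) ^ 2 * (2 * ((blk j).erase x).card) *
          fixedTagEnergy adj blk M x j F := by gcongr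
      _ = _ := by ring
  · intro j
    refine Finset.card_pos.1 ?_
    have h1 := h.card_le_two_mul_card_erase hd hN j x
    have h2 := IsBlockPartition.two_le_card (d := d) (N := N) hd hN
    omega

theorem card_sector_filter_le {i : ι} (hdisj : ∀ i j, i ≠ j → Disjoint (blk i) (blk j))
    {M : ι → ℕ} {x : S} (hx : x ∈ blk i) {θ : ℝ} (h0 : 0 ≤ θ) (h1 : θ ≤ 1)
    (hM : (M i : ℝ) ≤ θ * (blk i).card) (A : Finset S) :
    A ⊆ (blk i).erase x →
    (((sector blk M x).filter fun η => ∀ a ∈ A, η a = true).card : ℝ) ≤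
      θ ^ A.card * (sector blk M x).card := by
  induction A using Finset.induction_on with
  | empty => intro _; simp
  | insert u A hu ih =>
    intro hsub
    have hA : A ⊆ (blk i).erase x := fun a ha => hsub (Finset.mem_insert_of_mem ha)
    have huB : u ∈ (blk i).erase x := hsub (Finset.mem_insert_self _ _)
    have ih := ih hA
    set Q : Finset S → Finset (S → Bool) := fun A =>
      (sector blk M x).filter fun η => ∀ a ∈ A, η a = true with hQ
    set R := (blk i).erase x \ A with hR
    have huR : u ∈ R := by rw [hR, mem_sdiff]; exact ⟨huB, hu⟩
    have hRpos : (0 : ℝ) < R.card := by exact_mod_cast Finset.card_pos.2 ⟨u, huR⟩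
    have hRcard : (R.card : ℝ) = (blk i).card - 1 - A.card := by
      have e1 := Finset.card_sdiff_add_card_eq_card hA
      rw [← hR] at e1
      have e2 := Finset.card_erase_add_one hx
      have e3 : R.card + A.card + 1 = (blk i).card := by omega
      rw [← e3]; push_cast; ring
    have hconst : ∀ u' ∈ R, (Q (insert u' A)).card = (Q (insert u A)).card := by
      intro u' hu'
      rw [hR, mem_sdiff] at hu'
      have hmem := swap_comp_mem_sector_iff hdisj (M := M) huB hu'.1
      have hfix : ∀ a ∈ A, Equiv.swap u u' a = a := fun a ha =>
        Equiv.swap_apply_of_ne_of_ne (fun h => hu (h ▸ ha)) (fun h => hu'.2 (h ▸ ha))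
      refine Finset.card_bij' (fun η _ => η ∘ Equiv.swap u u') (fun η _ => η ∘ Equiv.swap u u')
        ?_ ?_ ?_ ?_
      · intro η hη
        simp only [hQ, mem_filter, Finset.forall_mem_insert] at hη ⊢
        refine ⟨(hmem η).2 hη.1, by simpa using hη.2.1, fun a ha => ?_⟩
        simp only [Function.comp, hfix a ha]
        exact hη.2.2 a ha
      · intro η hη
        simp only [hQ, mem_filter, Finset.forall_mem_insert] at hη ⊢
        refine ⟨(hmem η).2 hη.1, by simpa using hη.2.1, fun a ha => ?_⟩
        simp only [Function.comp, hfix a ha]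
        exact hη.2.2 a ha
      · intro η _; ext v; simp
      · intro η _; ext v; simp
    have hcount : ∑ u' ∈ R, ((Q (insert u' A)).card : ℝ) =
        ∑ η ∈ Q A, ((R.filter fun u' => η u' = true).card : ℝ) := by
      have e : ∀ u' ∈ R, ((Q (insert u' A)).card : ℝ) =
          ∑ η ∈ Q A, if η u' = true then (1 : ℝ) else 0 := by
        intro u' _
        rw [Finset.sum_boole]
        congr 2
        ext η
        simp only [hQ, mem_filter, Finset.forall_mem_insert]
        tauto
      rw [Finset.sum_congr rfl e, Finset.sum_comm]
      exact Finset.sum_congr rfl fun η _ => by rw [Finset.sum_boole]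
    have hpart : ∀ η ∈ Q A, ((R.filter fun u' => η u' = true).card : ℝ) = M i - 1 - A.card := by
      intro η hη
      simp only [hQ, mem_filter, mem_sector] at hη
      have e1 : (blk i).filter (fun y => η y = true) =
          insert x (A ∪ R.filter fun u' => η u' = true) := by
        ext y
        simp only [mem_filter, mem_insert, mem_union, hR, mem_sdiff, mem_erase]
        constructor
        · rintro ⟨hy, hy1⟩
          tauto
        · rintro (rfl | hy | hy)
          · exact ⟨hx, hη.1.1⟩
          · exact ⟨Finset.mem_of_mem_erase (hA hy), hη.2 y hy⟩
          · exact ⟨hy.1.1.2, hy.2⟩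
      have e2 := hη.1.2 i
      unfold particles at e2
      rw [e1, Finset.card_insert_of_notMem, Finset.card_union_of_disjoint] at e2
      · rw [← e2]; push_cast; ring
      · rw [Finset.disjoint_left]
        intro a ha ha'
        simp only [hR, mem_filter, mem_sdiff] at ha'
        exact ha'.1.2 ha
      · simp only [hR, mem_union, mem_filter, mem_sdiff, mem_erase, not_or]
        exact ⟨fun h => (Finset.mem_erase.1 (hA h)).1 rfl, by simp⟩
    rw [Finset.sum_congr rfl hpart, Finset.sum_const, nsmul_eq_mul,
      Finset.sum_congr rfl (fun u' hu' => by rw [hconst u' hu']), Finset.sum_const,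
      nsmul_eq_mul] at hcount
    have hstep : ((Q (insert u A)).card : ℝ) ≤ θ * (Q A).card := by
      refine le_of_mul_le_mul_left ?_ hRpos
      rw [hcount]
      have : (M i : ℝ) - 1 - A.card ≤ θ * R.card := by
        rw [hRcard]
        have : (0 : ℝ) ≤ A.card := by positivity
        nlinarith
      calc _ ≤ ((Q A).card : ℝ) * (θ * R.card) := by gcongr
        _ = _ := by ring
    rw [Finset.card_insert_of_notMem hu, pow_succ]
    calc _ ≤ θ * (Q A).card := hstep
      _ ≤ θ * (θ ^ A.card * (sector blk M x).card) := by gcongr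
      _ = _ := by ring

end

theorem abs_sum_le_sqrt_mul_sqrt {α : Type*} (A : Finset α) (g : α → ℝ) {Q : ℝ}
    (hQ : ∑ a ∈ A, g a ^ 2 ≤ Q) : |∑ a ∈ A, g a| ≤ √A.card * √Q := by
  rw [← Real.sqrt_mul (by positivity)]
  refine Real.abs_le_sqrt (sq_sum_le_card_mul_sum_sq.trans ?_)
  gcongr

theorem CubeAdj.le_add_one {d N : ℕ} {s t : Cube d N} (h : CubeAdj s t) (k : Fin d) :
    (s k : ℕ) ≤ t k + 1 ∧ (t k : ℕ) ≤ s k + 1 := by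
  have h1 : (((s k : ℕ) : ℤ) - ((t k : ℕ) : ℤ)) ^ 2 ≤ 1 := by
    rw [← show _ = (1 : ℤ) from h]
    exact Finset.single_le_sum (f := fun k => (((s k : ℕ) : ℤ) - ((t k : ℕ) : ℤ)) ^ 2)
      (fun _ _ => sq_nonneg _) (mem_univ k)
  have h2 := abs_le.1 ((sq_le_one_iff_abs_le_one _).1 h1)
  omega

theorem CubeAdj.ne {d N : ℕ} {s t : Cube d N} (h : CubeAdj s t) : s ≠ t := by
  rintro rfl
  simp [CubeAdj] at h

section

variable {S ι : Type*} [Fintype S] [DecidableEq S] {d N : ℕ} {adj : S → S → Prop}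
    {blk : ι → Finset S} {φ : ι → Cube d N → S}

/-- The Dirichlet energy, in a sector with tag at `x`, of the jumps of the tag to an empty
site `z`. -/
def tagJumpEnergy (blk : ι → Finset S) (M : ι → ℕ) (x z : S) (f : S → (S → Bool) → ℝ) : ℝ :=
  ∑ η ∈ sector blk M x, if η z = false then (f z (η ∘ Equiv.swap x z) - f x η) ^ 2 else 0

theorem tagJumpEnergy_nonneg (M : ι → ℕ) (x z : S) (f : S → (S → Bool) → ℝ) :
    0 ≤ tagJumpEnergy blk M x z f := by
  unfold tagJumpEnergy
  positivity

namespace IsBlockPartition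

theorem mem_erase (h : IsBlockPartition adj blk φ) (i : ι) {s u : Cube d N} (hs : s ≠ u) :
    φ i s ∈ (blk i).erase (φ i u) :=
  Finset.mem_erase.2 ⟨(h.inj i).ne hs, h.mem i s⟩

theorem sum_swap_le (h : IsBlockPartition adj blk φ) (hd : 2 ≤ d) (hN : 1 ≤ N) (M : ι → ℕ) (i : ι)
    {u s t : Cube d N} (hs : s ≠ u) (ht : t ≠ u) (F : (S → Bool) → ℝ) (R : ℕ)
    (hR : ∀ k, (s k : ℕ) ≤ t k + R ∧ (t k : ℕ) ≤ s k + R) :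
    ∑ η ∈ sector blk M (φ i u), (F (η ∘ Equiv.swap (φ i s) (φ i t)) - F η) ^ 2 ≤
      (36 * d * R) ^ 2 * fixedTagEnergy adj blk M (φ i u) i F := by
  have hq := isSwapCost_rep (configRep S) (sectorVector blk M (φ i u) F)
  have key := Cube.cost_le_of_adj_le (hq.comp (φ i)) (x := u) hd hN
    (Q := √(fixedTagEnergy adj blk M (φ i u) i F)) ?_ (Real.sqrt_nonneg _) hs ht R hR
  · rw [← norm_swap_sectorVector h.disj M (φ i u) F (h.mem_erase i hs) (h.mem_erase i ht)]
    refine (pow_le_pow_left₀ (norm_nonneg _) key 2).trans (le_of_eq ?_)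
    rw [mul_pow, Real.sq_sqrt (fixedTagEnergy_nonneg _ _ _ _)]
  · intro s t hs ht hst
    refine Real.le_sqrt_of_sq_le ?_
    rw [norm_swap_sectorVector h.disj M (φ i u) F (h.mem_erase i hs) (h.mem_erase i ht)]
    exact le_fixedTagEnergy M F (h.mem_erase i hs) (h.mem_erase i ht) (h.adj i s t hst)

/-- The tag is moved from `φ i u` to `φ i v` with the help of the hole at `φ i w`. -/
theorem abs_sum_tag_move_le (h : IsBlockPartition adj blk φ) (hd : 2 ≤ d) (hN : 1 ≤ N)
    (M : ι → ℕ) (i : ι) {u v w : Cube d N} (huv : CubeAdj u v) (hw : w ≠ u)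
    (f : S → (S → Bool) → ℝ) {A : Finset (S → Bool)} (hA : A ⊆ sector blk M (φ i u))
    (hhole : ∀ η ∈ A, η (φ i w) = false) :
    |∑ η ∈ A, (f (φ i v) (η ∘ Equiv.swap (φ i u) (φ i v)) - f (φ i u) η)| ≤
      √A.card * (36 * d * (Cube.supDist u w + 1) *
        (√(fixedTagEnergy adj blk M (φ i u) i (f (φ i u))) +
         √(fixedTagEnergy adj blk M (φ i v) i (f (φ i v))) +
         √(tagJumpEnergy blk M (φ i u) (φ i v) f))) := by
  set x := φ i u with hx
  set z := φ i v with hz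
  set y := φ i w with hy
  set r := Cube.supDist u w with hr
  set a := √(fixedTagEnergy adj blk M x i (f x)) with ha
  set b := √(fixedTagEnergy adj blk M z i (f z)) with hb
  set c := √(tagJumpEnergy blk M x z f) with hc
  have ha0 : 0 ≤ a := Real.sqrt_nonneg _
  have hb0 : 0 ≤ b := Real.sqrt_nonneg _
  have hc0 : 0 ≤ c := Real.sqrt_nonneg _
  have hd1 : (2 : ℝ) ≤ d := by exact_mod_cast hd
  have hr0 : (0 : ℝ) ≤ r := by positivity
  have hdr : (1 : ℝ) ≤ 36 * d * (r + 1) := by nlinarith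
  have hxz : x ≠ z := (h.inj i).ne huv.ne
  by_cases hwv : w = v
  · have hQ : ∑ η ∈ A, (f z (η ∘ Equiv.swap x z) - f x η) ^ 2 ≤ tagJumpEnergy blk M x z f := by
      unfold tagJumpEnergy
      calc _ = ∑ η ∈ A, if η z = false then (f z (η ∘ Equiv.swap x z) - f x η) ^ 2 else 0 := by
            refine Finset.sum_congr rfl fun η hη => ?_
            rw [if_pos]
            have := hhole η hη
            rwa [hy, hwv] at this
        _ ≤ _ := Finset.sum_le_sum_of_subset_of_nonneg hA fun _ _ _ => by positivity
    refine (abs_sum_le_sqrt_mul_sqrt A _ hQ).trans ?_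
    gcongr
    rw [← hc]
    nlinarith
  have hyx : y ≠ x := (h.inj i).ne hw
  have hyz : y ≠ z := (h.inj i).ne hwv
  have hxB : x ∈ blk i := h.mem i u
  have hzB : z ∈ blk i := h.mem i v
  have hyB : y ∈ blk i := h.mem i w
  set σ : Equiv.Perm S := Equiv.swap z y * Equiv.swap x z with hσ
  have hcomp : ∀ η : S → Bool, η ∘ Equiv.swap x z = (η ∘ σ) ∘ Equiv.swap x y := by
    intro η
    ext p
    simp only [hσ, Function.comp, Equiv.Perm.mul_apply]
    congr 1
    simp only [Equiv.swap_apply_def]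
    grind
  have hsplit : ∀ η : S → Bool, f z (η ∘ Equiv.swap x z) - f x η =
      (f z ((η ∘ σ) ∘ Equiv.swap x y) - f z (η ∘ σ)) +
      (f z ((η ∘ Equiv.swap z y) ∘ Equiv.swap x z) - f x (η ∘ Equiv.swap z y)) +
      (f x (η ∘ Equiv.swap z y) - f x η) := by
    intro η
    have : (η ∘ Equiv.swap z y) ∘ Equiv.swap x z = η ∘ σ := rfl
    rw [this, hcomp η]
    ring
  have hσmem : σ ∈ permsOn (blk i) :=
    mul_mem_permsOn (swap_mem_permsOn hzB hyB) (swap_mem_permsOn hxB hzB)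
  have h1 : ∑ η ∈ A, (f z ((η ∘ σ) ∘ Equiv.swap x y) - f z (η ∘ σ)) ^ 2 ≤
      (36 * d * r) ^ 2 * fixedTagEnergy adj blk M z i (f z) := by
    refine le_trans ?_ (h.sum_swap_le hd hN M i (u := v) (s := u) (t := w) huv.ne hwv (f z) r
      (Cube.le_supDist u w))
    rw [← sum_sector_comp h.disj M (x := x) (z := z) hσmem
      (by rw [hσ, Equiv.Perm.mul_apply, Equiv.swap_apply_right,
        Equiv.swap_apply_of_ne_of_ne hxz hyx.symm])]
    exact Finset.sum_le_sum_of_subset_of_nonneg hA fun _ _ _ => by positivity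
  have h2 : ∑ η ∈ A, (f z ((η ∘ Equiv.swap z y) ∘ Equiv.swap x z) - f x (η ∘ Equiv.swap z y)) ^ 2 ≤
      tagJumpEnergy blk M x z f := by
    unfold tagJumpEnergy
    rw [← sum_sector_comp h.disj M (x := x) (z := x) (swap_mem_permsOn hzB hyB)
      (Equiv.swap_apply_of_ne_of_ne hxz hyx.symm)]
    refine le_trans (le_of_eq ?_) (Finset.sum_le_sum_of_subset_of_nonneg hA
      fun _ _ _ => by positivity)
    refine Finset.sum_congr rfl fun η hη => ?_
    rw [if_pos]
    simp only [Function.comp, Equiv.swap_apply_left]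
    exact hhole η hη
  have h3 : ∑ η ∈ A, (f x (η ∘ Equiv.swap z y) - f x η) ^ 2 ≤
      (36 * d * (r + 1 : ℕ)) ^ 2 * fixedTagEnergy adj blk M x i (f x) := by
    refine le_trans ?_ (h.sum_swap_le hd hN M i (u := u) (s := v) (t := w) huv.ne.symm hw (f x)
      (r + 1) ?_)
    · exact Finset.sum_le_sum_of_subset_of_nonneg hA fun _ _ _ => by positivity
    · intro k
      have e1 := Cube.le_supDist u w k
      have e2 := huv.le_add_one k
      omega
  have k1 := abs_sum_le_sqrt_mul_sqrt A _ h1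
  have k2 := abs_sum_le_sqrt_mul_sqrt A _ h2
  have k3 := abs_sum_le_sqrt_mul_sqrt A _ h3
  rw [Real.sqrt_mul (by positivity), Real.sqrt_sq (by positivity)] at k1 k3
  rw [Finset.sum_congr rfl fun η _ => hsplit η]
  rw [Finset.sum_add_distrib, Finset.sum_add_distrib]
  refine (abs_add_three _ _ _).trans ((add_le_add (add_le_add k1 k2) k3).trans ?_)
  rw [← mul_add, ← mul_add]
  refine mul_le_mul_of_nonneg_left ?_ (Real.sqrt_nonneg _)
  rw [← ha, ← hb, ← hc]
  push_cast
  have e1 : 0 ≤ 36 * (d : ℝ) * b := by positivity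
  have e2 : c ≤ 36 * d * (r + 1) * c := le_mul_of_one_le_left hc0 hdr
  nlinarith

theorem sq_sum_tag_move_le (h : IsBlockPartition adj blk φ) (hd : 2 ≤ d) (hN : 1 ≤ N)
    {M : ι → ℕ} {i : ι} {θ : ℝ} (h0 : 0 < θ) (h1 : θ < 1) (hM : (M i : ℝ) ≤ θ * (blk i).card)
    {C : ℝ} (hC : ∀ x : Cube d N, ∑ w, (Cube.supDist x w + 1 : ℝ) * √θ ^ Cube.supDist x w ≤ C)
    {u v : Cube d N} (huv : CubeAdj u v) (f : S → (S → Bool) → ℝ) :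
    (∑ η ∈ sector blk M (φ i u),
      (f (φ i v) (η ∘ Equiv.swap (φ i u) (φ i v)) - f (φ i u) η)) ^ 2 ≤
      (sector blk M (φ i u)).card * (3 * (36 * d * C) ^ 2 / θ *
        (fixedTagEnergy adj blk M (φ i u) i (f (φ i u)) +
         fixedTagEnergy adj blk M (φ i v) i (f (φ i v)) +
         tagJumpEnergy blk M (φ i u) (φ i v) f)) := by
  set x := φ i u with hx
  set z := φ i v with hz
  set Ω := sector blk M x with hΩ
  set K : ℝ := (Ω.card : ℝ) with hK
  set g : (S → Bool) → ℝ := fun η => f z (η ∘ Equiv.swap x z) - f x η with hg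
  have hcardpos : (0 : ℝ) < (blk i).card := by
    exact_mod_cast Finset.card_pos.2 ⟨x, h.mem i u⟩
  have hhole : ∀ η, ∃ w, η ∈ Ω → η (φ i w) = false ∧
      ∀ w', η (φ i w') = false → Cube.supDist u w ≤ Cube.supDist u w' := by
    intro η
    by_cases hη : η ∈ Ω
    · have hne : (univ.filter fun w => η (φ i w) = false).Nonempty := by
        by_contra hemp
        rw [Finset.not_nonempty_iff_eq_empty, Finset.filter_eq_empty_iff] at hemp
        have hall : particles (blk i) η = (blk i).card := by
          unfold particles
          rw [Finset.filter_true_of_mem]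
          intro y hy
          rw [← h.image, Finset.mem_image] at hy
          obtain ⟨w, -, rfl⟩ := hy
          simpa using hemp (mem_univ w)
        rw [(mem_sector.1 hη).2 i] at hall
        rw [hall] at hM
        nlinarith
      obtain ⟨w, hw, hmin⟩ := Finset.exists_min_image _ (fun w => Cube.supDist u w) hne
      refine ⟨w, fun _ => ⟨by simpa using hw, fun w' hw' => hmin w' (by simpa using hw')⟩⟩
    · exact ⟨u, fun h => absurd h hη⟩
  choose hole hhole using hhole
  set A : Cube d N → Finset (S → Bool) := fun w => Ω.filter fun η => hole η = w with hA
  set a := fixedTagEnergy adj blk M x i (f x) with ha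
  set b := fixedTagEnergy adj blk M z i (f z) with hb
  set c := tagJumpEnergy blk M x z f with hc
  have ha0 : 0 ≤ a := fixedTagEnergy_nonneg _ _ _ _
  have hb0 : 0 ≤ b := fixedTagEnergy_nonneg _ _ _ _
  have hc0 : 0 ≤ c := tagJumpEnergy_nonneg _ _ _ _
  set Z := √a + √b + √c with hZ
  have hAcard : ∀ w, ((A w).card : ℝ) ≤ K / θ * θ ^ Cube.supDist u w := by
    intro w
    set P := ((univ.filter fun w' => Cube.supDist u w' < Cube.supDist u w).image (φ i)).erase x
      with hP
    have hPsub : P ⊆ (blk i).erase x := by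
      refine Finset.erase_subset_erase _ ?_
      rw [← h.image]
      exact Finset.image_subset_image (Finset.filter_subset _ _)
    have e1 := card_sector_filter_le h.disj (h.mem i u) h0.le h1.le hM P hPsub
    have e2 : Cube.supDist u w ≤ P.card + 1 := by
      refine (Cube.supDist_le_card u w).trans ?_
      rw [← Finset.card_image_of_injective _ (h.inj i)]
      have := Finset.pred_card_le_card_erase
        (s := (univ.filter fun w' => Cube.supDist u w' < Cube.supDist u w).image (φ i)) (a := x)
      rw [← hP] at this
      omega
    have e3 : ((A w).card : ℝ) ≤ θ ^ P.card * K := by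
      refine le_trans ?_ e1
      norm_cast
      refine Finset.card_le_card fun η hη => ?_
      simp only [hA, mem_filter] at hη ⊢
      refine ⟨hη.1, fun y hy => ?_⟩
      rw [hP, Finset.mem_erase, Finset.mem_image] at hy
      obtain ⟨-, w', hw', rfl⟩ := hy
      simp only [mem_filter, mem_univ, true_and] at hw'
      by_contra hcon
      have := (hhole η hη.1).2 w' (by simpa using hcon)
      rw [hη.2] at this
      omega
    have e4 : θ ^ (P.card + 1) ≤ θ ^ Cube.supDist u w := pow_le_pow_of_le_one h0.le h1.le e2
    rw [div_mul_eq_mul_div, le_div_iff₀ h0]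
    have hK0 : 0 ≤ K := by positivity
    calc _ ≤ θ ^ P.card * K * θ := by gcongr
      _ = K * θ ^ (P.card + 1) := by ring
      _ ≤ _ := by gcongr
  have hterm : ∀ w, |∑ η ∈ A w, g η| ≤
      √(K / θ) * (36 * d) * Z * ((Cube.supDist u w + 1) * √θ ^ Cube.supDist u w) := by
    intro w
    by_cases hwu : w = u
    · have : A w = ∅ := by
        rw [hA, Finset.filter_eq_empty_iff]
        intro η hη hw
        have e1 := (hhole η hη).1
        rw [hw, hwu, ← hx, (mem_sector.1 hη).1] at e1
        cases e1
      rw [this]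
      simp only [Finset.sum_empty, abs_zero]
      positivity
    · have e1 := h.abs_sum_tag_move_le hd hN M i huv hwu f (A := A w)
        (Finset.filter_subset _ _) (fun η hη => by
          simp only [hA, mem_filter] at hη
          rw [← hη.2]
          exact (hhole η hη.1).1)
      refine e1.trans ?_
      have e2 : √((A w).card : ℝ) ≤ √(K / θ) * √θ ^ Cube.supDist u w := by
        refine (Real.sqrt_le_sqrt (hAcard w)).trans (le_of_eq ?_)
        rw [Real.sqrt_mul (by positivity)]
        congr 1
        rw [Real.sqrt_eq_iff_mul_self_eq (by positivity) (by positivity), ← mul_pow,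
          Real.mul_self_sqrt h0.le]
      calc _ ≤ √(K / θ) * √θ ^ Cube.supDist u w * (36 * d * (Cube.supDist u w + 1) * Z) := by
            gcongr
        _ = _ := by ring
  have habs : |∑ η ∈ Ω, g η| ≤ √(K / θ) * (36 * d) * Z * C := by
    rw [← Finset.sum_fiberwise Ω hole]
    refine (Finset.abs_sum_le_sum_abs _ _).trans ((Finset.sum_le_sum fun w _ => hterm w).trans ?_)
    rw [← Finset.mul_sum]
    gcongr
    exact hC u
  have hZ2 : Z ^ 2 ≤ 3 * (a + b + c) := by
    have e1 := Real.sq_sqrt ha0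
    have e2 := Real.sq_sqrt hb0
    have e3 := Real.sq_sqrt hc0
    rw [hZ]
    nlinarith [sq_nonneg (√a - √b), sq_nonneg (√a - √c), sq_nonneg (√b - √c)]
  have hsq : (∑ η ∈ Ω, g η) ^ 2 ≤ (√(K / θ) * (36 * d) * Z * C) ^ 2 := by
    rw [← sq_abs]
    exact pow_le_pow_left₀ (abs_nonneg _) habs 2
  refine hsq.trans ?_
  calc (√(K / θ) * (36 * d) * Z * C) ^ 2 = √(K / θ) ^ 2 * (36 * d * C) ^ 2 * Z ^ 2 := by ring
    _ ≤ √(K / θ) ^ 2 * (36 * d * C) ^ 2 * (3 * (a + b + c)) := by gcongr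
    _ = _ := by
      rw [Real.sq_sqrt (by positivity)]
      ring

end IsBlockPartition

end

theorem sum_sub_sq_eq {α : Type*} (A : Finset α) (g : α → ℝ) {μ : ℝ}
    (hμ : ∑ a ∈ A, g a = A.card * μ) (c : ℝ) :
    ∑ a ∈ A, (g a - c) ^ 2 = ∑ a ∈ A, (g a - μ) ^ 2 + A.card * (μ - c) ^ 2 := by
  have h1 : ∀ a ∈ A, (g a - c) ^ 2 = (g a - μ) ^ 2 + 2 * (μ - c) * (g a - μ) + (μ - c) ^ 2 :=
    fun a _ => by ring
  rw [Finset.sum_congr rfl h1, Finset.sum_add_distrib, Finset.sum_add_distrib, ← Finset.mul_sum,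
    Finset.sum_sub_distrib, hμ, Finset.sum_const, Finset.sum_const]
  simp only [nsmul_eq_mul]
  ring

theorem sum_sum_sub_sq_eq {α : Type*} (A : Finset α) (g : α → ℝ) {μ : ℝ}
    (hμ : ∑ a ∈ A, g a = A.card * μ) :
    ∑ a ∈ A, ∑ b ∈ A, (g a - g b) ^ 2 = 2 * A.card * ∑ a ∈ A, (g a - μ) ^ 2 := by
  have h1 : ∀ a ∈ A, ∑ b ∈ A, (g a - g b) ^ 2 =
      ∑ b ∈ A, (g b - μ) ^ 2 + A.card * (g a - μ) ^ 2 := by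
    intro a _
    rw [show A.card * (g a - μ) ^ 2 = A.card * (μ - g a) ^ 2 by ring, ← sum_sub_sq_eq A g hμ]
    exact Finset.sum_congr rfl fun b _ => by ring
  rw [Finset.sum_congr rfl h1, Finset.sum_add_distrib, ← Finset.mul_sum, Finset.sum_const,
    nsmul_eq_mul]
  ring

theorem CubeAdj.supDist_eq {d N : ℕ} {s t : Cube d N} (h : CubeAdj s t) :
    Cube.supDist s t = 1 := by
  have h1 : Cube.supDist s t ≤ 1 := by
    refine Finset.sup_le fun k _ => ?_
    have hk := h
    unfold CubeAdj at hk
    have h1 : (((s k : ℕ) : ℤ) - ((t k : ℕ) : ℤ)) ^ 2 ≤ 1 := by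
      rw [← hk]
      exact Finset.single_le_sum (f := fun k => (((s k : ℕ) : ℤ) - ((t k : ℕ) : ℤ)) ^ 2)
        (fun _ _ => sq_nonneg _) (mem_univ k)
    have h2 := abs_le.1 ((sq_le_one_iff_abs_le_one _).1 h1)
    omega
  have h2 : Cube.supDist s t ≠ 0 := by
    intro h0
    apply h.ne
    ext k
    have := Cube.le_supDist s t k
    omega
  omega

theorem sum_cubeAdj_le {d N : ℕ} (s : Cube d N) {c : ℝ} (hc : 0 ≤ c) :
    (∑ t, if CubeAdj s t then c else 0) ≤ 3 ^ d * c := by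
  rw [← Finset.sum_filter, Finset.sum_const, nsmul_eq_mul]
  gcongr
  have h1 := Cube.card_supDist_eq_le s 1
  have h2 : (univ.filter fun t => CubeAdj s t).card ≤
      (univ.filter fun w => Cube.supDist s w = 1).card :=
    Finset.card_le_card fun t ht => by
      simp only [mem_filter, mem_univ, true_and] at ht ⊢
      exact CubeAdj.supDist_eq ht
  exact_mod_cast h2.trans h1

theorem isSwapCost_abs_sub {S : Type*} (g : S → ℝ) : IsSwapCost fun s t => |g s - g t| where
  nonneg _ _ := abs_nonneg _
  symm _ _ := abs_sub_comm _ _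
  self _ := by simp
  tri s t u := by
    have h1 := abs_sub_le (g s) (g u) (g t)
    have h2 := abs_nonneg (g s - g u)
    linarith

section

variable {S ι : Type*} [Fintype S] [DecidableEq S] {d N : ℕ} {adj : S → S → Prop}
    {blk : ι → Finset S} {φ : ι → Cube d N → S}

namespace IsBlockPartition

theorem card_sector_eq (h : IsBlockPartition adj blk φ) (M : ι → ℕ) {i : ι} {x z : S}
    (hx : x ∈ blk i) (hz : z ∈ blk i) :
    (sector blk M x).card = (sector blk M z).card := by
  have := sum_sector_comp h.disj M (x := x) (z := z) (swap_mem_permsOn hx hz)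
    (Equiv.swap_apply_right x z) (fun _ => (1 : ℝ))
  simp only [Finset.sum_const, nsmul_eq_mul, mul_one] at this
  exact_mod_cast this

theorem exists_block_variance_le [Fintype ι] (h : IsBlockPartition adj blk φ) (hd : 2 ≤ d)
    (hN : 1 ≤ N) {M : ι → ℕ} {i : ι} {θ : ℝ} (h0 : 0 < θ) (h1 : θ < 1)
    (hM : (M i : ℝ) ≤ θ * (blk i).card) {C : ℝ}
    (hC : ∀ x : Cube d N, ∑ w, (Cube.supDist x w + 1 : ℝ) * √θ ^ Cube.supDist x w ≤ C)
    (f : S → (S → Bool) → ℝ) :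
    ∃ c, ∑ x ∈ blk i, ∑ η ∈ sector blk M x, (f x η - c) ^ 2 ≤
      (5216 * d ^ 2 + 16 * 3 ^ d * d ^ 2 * (3 * (36 * d * C) ^ 2 / θ)) * (N + 1) ^ 2 *
        (∑ x ∈ blk i, ∑ j, fixedTagEnergy adj blk M x j (f x) +
          ∑ x ∈ blk i, ∑ z ∈ blk i, if adj x z then tagJumpEnergy blk M x z f else 0) := by
  set C1 : ℝ := 3 * (36 * d * C) ^ 2 / θ with hC1
  have hC10 : 0 ≤ C1 := by positivity
  set T := ∑ x ∈ blk i, ∑ j, fixedTagEnergy adj blk M x j (f x) with hT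
  set J := ∑ x ∈ blk i, ∑ z ∈ blk i, (if adj x z then tagJumpEnergy blk M x z f else 0) with hJ
  have hF0 : ∀ x j, 0 ≤ fixedTagEnergy adj blk M x j (f x) :=
    fun x j => fixedTagEnergy_nonneg _ _ _ _
  have hJ0 : ∀ x z, 0 ≤ tagJumpEnergy blk M x z f := fun x z => tagJumpEnergy_nonneg _ _ _ _
  have hT0 : 0 ≤ T := Finset.sum_nonneg fun x _ => Finset.sum_nonneg fun j _ => hF0 x j
  have hJ00 : 0 ≤ J := Finset.sum_nonneg fun x _ => Finset.sum_nonneg fun z _ => by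
    split_ifs
    · exact hJ0 x z
    · exact le_rfl
  clear_value C1 T J
  by_cases hempty : ∀ x ∈ blk i, sector blk M x = ∅
  · refine ⟨0, ?_⟩
    rw [Finset.sum_eq_zero]
    · exact mul_nonneg (mul_nonneg (by positivity) (by positivity)) (add_nonneg hT0 hJ00)
    · intro x hx
      rw [hempty x hx, Finset.sum_empty]
  push Not at hempty
  obtain ⟨x₀, hx₀, hne⟩ := hempty
  obtain ⟨K, hK⟩ : ∃ K : ℝ, K = ((sector blk M x₀).card : ℝ) := ⟨_, rfl⟩
  have hK0 : 0 < K := by rw [hK]; exact_mod_cast Finset.card_pos.2 hne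
  have hKx : ∀ x ∈ blk i, ((sector blk M x).card : ℝ) = K := fun x hx => by
    rw [hK, h.card_sector_eq M hx hx₀]
  obtain ⟨m, hmx⟩ : ∃ m : S → ℝ, ∀ x, ∑ η ∈ sector blk M x, f x η = K * m x :=
    ⟨fun x => K⁻¹ * ∑ η ∈ sector blk M x, f x η, fun x => (mul_inv_cancel_left₀ hK0.ne' _).symm⟩
  have hB0 : (0 : ℝ) < (blk i).card := by exact_mod_cast Finset.card_pos.2 ⟨x₀, hx₀⟩
  obtain ⟨c, hmc⟩ : ∃ c : ℝ, ∑ x ∈ blk i, m x = (blk i).card * c :=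
    ⟨((blk i).card : ℝ)⁻¹ * ∑ x ∈ blk i, m x, (mul_inv_cancel_left₀ hB0.ne' _).symm⟩
  refine ⟨c, ?_⟩
  have e1 : ∀ x ∈ blk i, ∑ η ∈ sector blk M x, (f x η - c) ^ 2 ≤
      5216 * d ^ 2 * (N + 1) ^ 2 * ∑ j, fixedTagEnergy adj blk M x j (f x) +
        K * (m x - c) ^ 2 := by
    intro x hx
    have hmean : ∑ η ∈ sector blk M x, f x η = (sector blk M x).card * m x := by
      rw [hKx x hx, hmx]
    obtain ⟨c', hc'⟩ := h.exists_sum_sector_le hd hN M x (f x)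
    rw [sum_sub_sq_eq _ _ hmean, hKx x hx] at hc' ⊢
    have : 0 ≤ K * (m x - c') ^ 2 := by positivity
    linarith
  have e2 : ∑ x ∈ blk i, (m x - c) ^ 2 ≤ 8 * d ^ 2 * (N + 1) ^ 2 *
      ∑ u, ∑ v, if CubeAdj u v then (m (φ i u) - m (φ i v)) ^ 2 else 0 := by
    have p1 := h.poincare_blk i (isSwapCost_abs_sub m)
    simp only [sq_abs] at p1
    rw [sum_sum_sub_sq_eq _ _ hmc, ← h.card_blk i] at p1
    refine le_of_mul_le_mul_left ?_ (show (0 : ℝ) < 2 * (blk i).card by positivity)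
    calc _ ≤ _ := p1
      _ = _ := by ring
  have e3 : ∀ u v : Cube d N, CubeAdj u v → K * (m (φ i u) - m (φ i v)) ^ 2 ≤
      C1 * (fixedTagEnergy adj blk M (φ i u) i (f (φ i u)) +
         fixedTagEnergy adj blk M (φ i v) i (f (φ i v)) +
         tagJumpEnergy blk M (φ i u) (φ i v) f) := by
    intro u v huv
    have p1 := h.sq_sum_tag_move_le hd hN h0 h1 hM hC huv f
    rw [Finset.sum_sub_distrib, sum_sector_comp h.disj M
      (swap_mem_permsOn (h.mem i u) (h.mem i v)) (Equiv.swap_apply_right _ _), hmx, hmx,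
      hKx _ (h.mem i u), ← hC1] at p1
    refine le_of_mul_le_mul_left ?_ hK0
    calc _ = (K * m (φ i v) - K * m (φ i u)) ^ 2 := by ring
      _ ≤ _ := p1
  set L : Cube d N → ℝ := fun u => fixedTagEnergy adj blk M (φ i u) i (f (φ i u)) with hL
  have hL0 : ∀ u, 0 ≤ L u := fun u => hF0 _ _
  have hLT : ∑ u, L u ≤ T := by
    rw [hT, h.sum_blk i]
    exact Finset.sum_le_sum fun u _ =>
      Finset.single_le_sum (f := fun j => fixedTagEnergy adj blk M (φ i u) j (f (φ i u)))
        (fun j _ => hF0 _ j) (mem_univ i)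
  have hLsum : (∑ u, ∑ v, if CubeAdj u v then L u else 0) ≤ 3 ^ d * T := by
    calc _ ≤ ∑ u, 3 ^ d * L u := Finset.sum_le_sum fun u _ => sum_cubeAdj_le u (hL0 u)
      _ = 3 ^ d * ∑ u, L u := by rw [Finset.mul_sum]
      _ ≤ _ := by gcongr
  have hLsum' : (∑ u, ∑ v, if CubeAdj u v then L v else 0) ≤ 3 ^ d * T := by
    rw [Finset.sum_comm]
    refine le_trans (le_of_eq ?_) hLsum
    refine Finset.sum_congr rfl fun u _ => Finset.sum_congr rfl fun v _ => ?_
    simp only [Cube.adj_comm v u]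
  have hJsum : (∑ u, ∑ v, if CubeAdj u v then tagJumpEnergy blk M (φ i u) (φ i v) f else 0) ≤
      J := by
    rw [hJ]
    simp only [h.sum_blk i]
    refine Finset.sum_le_sum fun u _ => Finset.sum_le_sum fun v _ => ?_
    by_cases huv : CubeAdj u v
    · rw [if_pos huv, if_pos (h.adj i u v huv)]
    · rw [if_neg huv]
      split_ifs
      · exact hJ0 _ _
      · exact le_rfl
  have e4 : K * ∑ u, ∑ v, (if CubeAdj u v then (m (φ i u) - m (φ i v)) ^ 2 else 0) ≤
      C1 * (2 * 3 ^ d * T + J) := by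
    have p : ∀ u v : Cube d N, K * (if CubeAdj u v then (m (φ i u) - m (φ i v)) ^ 2 else 0) ≤
        C1 * ((if CubeAdj u v then L u else 0) + (if CubeAdj u v then L v else 0) +
          (if CubeAdj u v then tagJumpEnergy blk M (φ i u) (φ i v) f else 0)) := by
      intro u v
      by_cases huv : CubeAdj u v
      · simp only [if_pos huv]
        exact e3 u v huv
      · simp only [if_neg huv]
        simp
    rw [Finset.mul_sum]
    simp only [Finset.mul_sum]
    refine (Finset.sum_le_sum fun u _ => Finset.sum_le_sum fun v _ => p u v).trans ?_
    simp only [← Finset.mul_sum, Finset.sum_add_distrib]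
    gcongr
    linarith
  have hd0 : (0 : ℝ) ≤ 8 * d ^ 2 * (N + 1) ^ 2 := by positivity
  have h3 : (1 : ℝ) ≤ 3 ^ d := one_le_pow₀ (by norm_num)
  calc _ ≤ ∑ x ∈ blk i, (5216 * d ^ 2 * (N + 1) ^ 2 * ∑ j, fixedTagEnergy adj blk M x j (f x) +
        K * (m x - c) ^ 2) := Finset.sum_le_sum e1
    _ = 5216 * d ^ 2 * (N + 1) ^ 2 * T + K * ∑ x ∈ blk i, (m x - c) ^ 2 := by
      rw [Finset.sum_add_distrib, ← Finset.mul_sum, ← Finset.mul_sum, ← hT]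
    _ ≤ 5216 * d ^ 2 * (N + 1) ^ 2 * T + K * (8 * d ^ 2 * (N + 1) ^ 2 *
        ∑ u, ∑ v, if CubeAdj u v then (m (φ i u) - m (φ i v)) ^ 2 else 0) := by gcongr
    _ = 5216 * d ^ 2 * (N + 1) ^ 2 * T + 8 * d ^ 2 * (N + 1) ^ 2 *
        (K * ∑ u, ∑ v, if CubeAdj u v then (m (φ i u) - m (φ i v)) ^ 2 else 0) := by ring
    _ ≤ 5216 * d ^ 2 * (N + 1) ^ 2 * T + 8 * d ^ 2 * (N + 1) ^ 2 *
        (C1 * (2 * 3 ^ d * T + 2 * 3 ^ d * J) + 0) := by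
      refine add_le_add le_rfl (mul_le_mul_of_nonneg_left (e4.trans ?_) hd0)
      rw [add_zero]
      refine mul_le_mul_of_nonneg_left ?_ hC10
      nlinarith
    _ = 5216 * d ^ 2 * (N + 1) ^ 2 * T + 16 * 3 ^ d * d ^ 2 * C1 * (N + 1) ^ 2 * (T + J) := by ring
    _ ≤ 5216 * d ^ 2 * (N + 1) ^ 2 * (T + J) +
        16 * 3 ^ d * d ^ 2 * C1 * (N + 1) ^ 2 * (T + J) := by
      gcongr
      linarith
    _ = _ := by ring

end IsBlockPartition

end

theorem abs_sub_rpow_le {a b p : ℝ} (ha : 0 ≤ a) (hb : 0 ≤ b) (hp : 1 ≤ p) :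
    |a - b| ^ p ≤ |a ^ p - b ^ p| := by
  wlog hab : b ≤ a generalizing a b
  · rw [abs_sub_comm, abs_sub_comm (a ^ p)]
    exact this hb ha (le_of_not_ge hab)
  have h1 := Real.add_rpow_le_rpow_add (sub_nonneg.2 hab) hb hp
  rw [sub_add_cancel] at h1
  rw [abs_of_nonneg (sub_nonneg.2 hab)]
  exact (by linarith : (a - b) ^ p ≤ a ^ p - b ^ p).trans (le_abs_self _)

theorem abs_sub_rpow_two_mul_le {a b p : ℝ} (ha : 0 ≤ a) (hb : 0 ≤ b) (hp : 1 ≤ p) :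
    |a - b| ^ (2 * p) ≤ (a ^ p - b ^ p) ^ 2 := by
  rw [mul_comm, Real.rpow_mul (abs_nonneg _), Real.rpow_two, ← sq_abs (a ^ p - b ^ p)]
  exact pow_le_pow_left₀ (Real.rpow_nonneg (abs_nonneg _) _) (abs_sub_rpow_le ha hb hp) 2

theorem sum_abs_sub_rpow_le {α : Type*} (A : Finset α) {g : α → ℝ} (hg : ∀ a, 0 ≤ g a) {p : ℝ}
    (hp : 1 ≤ p) {μ : ℝ} (hμ : ∑ a ∈ A, g a = A.card * μ) (c : ℝ) :
    ∑ a ∈ A, |g a - μ| ^ (2 * p) ≤ 2 * ∑ a ∈ A, (g a ^ p - c) ^ 2 := by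
  rcases A.eq_empty_or_nonempty with rfl | hA
  · simp
  have hK : (0 : ℝ) < A.card := by exact_mod_cast hA.card_pos
  have h1 : ∀ a ∈ A, |g a - μ| ^ (2 * p) ≤
      ∑ b ∈ A, (A.card : ℝ)⁻¹ * (g a ^ p - g b ^ p) ^ 2 := by
    intro a _
    have e : g a - μ = ∑ b ∈ A, (A.card : ℝ)⁻¹ * (g a - g b) := by
      rw [← Finset.mul_sum, Finset.sum_sub_distrib, hμ, Finset.sum_const, nsmul_eq_mul]
      field_simp
    have e2 : |g a - μ| ≤ ∑ b ∈ A, (A.card : ℝ)⁻¹ * |g a - g b| := by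
      rw [e]
      refine (Finset.abs_sum_le_sum_abs _ _).trans (le_of_eq ?_)
      exact Finset.sum_congr rfl fun b _ => by rw [abs_mul, abs_of_pos (inv_pos.2 hK)]
    calc |g a - μ| ^ (2 * p) ≤ (∑ b ∈ A, (A.card : ℝ)⁻¹ * |g a - g b|) ^ (2 * p) :=
          Real.rpow_le_rpow (abs_nonneg _) e2 (by linarith)
      _ ≤ ∑ b ∈ A, (A.card : ℝ)⁻¹ * |g a - g b| ^ (2 * p) := by
          refine Real.rpow_arith_mean_le_arith_mean_rpow A _ _ (fun _ _ => (inv_pos.2 hK).le) ?_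
            (fun _ _ => abs_nonneg _) (by linarith)
          rw [Finset.sum_const, nsmul_eq_mul, mul_inv_cancel₀ hK.ne']
      _ ≤ _ := Finset.sum_le_sum fun b _ => mul_le_mul_of_nonneg_left
          (abs_sub_rpow_two_mul_le (hg a) (hg b) hp) (inv_pos.2 hK).le
  obtain ⟨ν, hν⟩ : ∃ ν : ℝ, ∑ a ∈ A, g a ^ p = A.card * ν :=
    ⟨(A.card : ℝ)⁻¹ * ∑ a ∈ A, g a ^ p, (mul_inv_cancel_left₀ hK.ne' _).symm⟩
  refine (Finset.sum_le_sum h1).trans ?_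
  simp only [← Finset.mul_sum]
  rw [sum_sum_sub_sq_eq A _ hν, sum_sub_sq_eq A _ hν c]
  have h2 : (0 : ℝ) ≤ A.card * (ν - c) ^ 2 := mul_nonneg hK.le (sq_nonneg _)
  calc _ = 2 * ∑ a ∈ A, (g a ^ p - ν) ^ 2 := by field_simp
    _ ≤ _ := by linarith

section

variable {S ι : Type*} [Fintype S] [DecidableEq S] {d N : ℕ} {adj : S → S → Prop}
    {blk : ι → Finset S} {φ : ι → Cube d N → S}

/-- The average of `h` over the configurations with a tagged particle in `blk i` and with `M j`
particles in each `blk j`. -/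
def sectorAvg (blk : ι → Finset S) (i : ι) (M : ι → ℕ) (h : S → (S → Bool) → ℝ) : ℝ :=
  ((blk i).card : ℝ)⁻¹ * ∑ y ∈ blk i,
    (((sector blk M y).card : ℝ)⁻¹ * ∑ η ∈ sector blk M y, h y η)

/-- The Dirichlet form restricted to the configurations with prescribed block counts. -/
def sectorEnergy (adj : S → S → Prop) (blk : ι → Finset S) (M : ι → ℕ) (x : S)
    (f : S → (S → Bool) → ℝ) : ℝ :=
  ∑ y, ∑ z, if adj y z then ∑ η ∈ sector blk M x, (if η y ≠ η z then (1 : ℝ) else 0) *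
    (f (Equiv.swap y z x) (η ∘ Equiv.swap y z) - f x η) ^ 2 else 0

theorem comp_swap_of_eq (η : S → Bool) {s t : S} (hst : η s = η t) : η ∘ Equiv.swap s t = η := by
  ext y
  simp only [Function.comp]
  rw [Equiv.swap_apply_def]
  split_ifs with h1 h2
  · rw [h1, hst]
  · rw [h2, hst]
  · rfl

namespace IsBlockPartition

theorem sum_sum_blk [Fintype ι] (h : IsBlockPartition adj blk φ) (g : S → ℝ) :
    ∑ i, ∑ x ∈ blk i, g x = ∑ x, g x := by
  rw [← Finset.sum_biUnion fun i _ j _ hij => h.disj i j hij]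
  refine Finset.sum_congr ?_ fun _ _ => rfl
  ext x
  simpa using h.cover x

theorem sum_erase_add_sum_le (x : S) (A : S → S → ℝ) (hA : ∀ s t, 0 ≤ A s t) :
    ∑ s ∈ univ.erase x, ∑ t ∈ univ.erase x, A s t + ∑ t, A x t ≤ ∑ s, ∑ t, A s t := by
  rw [← Finset.sum_erase_add univ (fun s => ∑ t, A s t) (mem_univ x)]
  refine add_le_add (Finset.sum_le_sum fun s _ => ?_) le_rfl
  exact Finset.sum_le_sum_of_subset_of_nonneg (Finset.erase_subset _ _) fun t _ _ => hA s t

theorem sum_fixedTagEnergy_add_sum_tagJumpEnergy_le [Fintype ι] (h : IsBlockPartition adj blk φ)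
    (M : ι → ℕ) (x : S) (f : S → (S → Bool) → ℝ) :
    ∑ j, fixedTagEnergy adj blk M x j (f x) +
      ∑ z, (if adj x z then tagJumpEnergy blk M x z f else 0) ≤ sectorEnergy adj blk M x f := by
  set A : S → S → ℝ := fun y z => if adj y z then ∑ η ∈ sector blk M x,
    (if η y ≠ η z then (1 : ℝ) else 0) *
      (f (Equiv.swap y z x) (η ∘ Equiv.swap y z) - f x η) ^ 2 else 0 with hA
  have hA0 : ∀ s t, 0 ≤ A s t := by
    intro s t
    simp only [hA]
    split_ifs
    · exact Finset.sum_nonneg fun η _ => mul_nonneg (by split_ifs <;> norm_num) (sq_nonneg _)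
    · exact le_rfl
  refine le_trans ?_ (sum_erase_add_sum_le x A hA0)
  refine add_le_add ?_ (Finset.sum_le_sum fun z _ => ?_)
  · have e : ∀ j, fixedTagEnergy adj blk M x j (f x) =
        ∑ s ∈ (blk j).erase x, ∑ t ∈ (blk j).erase x, A s t := by
      intro j
      unfold fixedTagEnergy
      refine Finset.sum_congr rfl fun s hs => Finset.sum_congr rfl fun t ht => ?_
      simp only [hA]
      by_cases hst : adj s t
      · rw [if_pos hst, if_pos hst]
        refine Finset.sum_congr rfl fun η _ => ?_
        rw [Equiv.swap_apply_of_ne_of_ne (Finset.ne_of_mem_erase hs).symm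
          (Finset.ne_of_mem_erase ht).symm]
        by_cases hη : η s = η t
        · rw [comp_swap_of_eq η hη]; simp
        · rw [if_pos hη, one_mul]
      · rw [if_neg hst, if_neg hst]
    simp only [e]
    calc ∑ j, ∑ s ∈ (blk j).erase x, ∑ t ∈ (blk j).erase x, A s t
        ≤ ∑ j, ∑ s ∈ (blk j).erase x, ∑ t ∈ univ.erase x, A s t :=
          Finset.sum_le_sum fun j _ => Finset.sum_le_sum fun s _ =>
            Finset.sum_le_sum_of_subset_of_nonneg
              (Finset.erase_subset_erase x (Finset.subset_univ _)) fun t _ _ => hA0 s t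
      _ = ∑ j, ∑ s ∈ blk j, (if s ≠ x then ∑ t ∈ univ.erase x, A s t else 0) := by
          refine Finset.sum_congr rfl fun j _ => ?_
          rw [← Finset.sum_filter]
          refine Finset.sum_congr ?_ fun _ _ => rfl
          ext s; simp [and_comm]
      _ = ∑ s ∈ univ.erase x, ∑ t ∈ univ.erase x, A s t := by
          rw [h.sum_sum_blk, ← Finset.sum_filter]
          refine Finset.sum_congr ?_ fun _ _ => rfl
          ext s; simp
      _ ≤ _ := le_rfl
  · simp only [hA]
    by_cases hz : adj x z
    · rw [if_pos hz, if_pos hz]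
      unfold tagJumpEnergy
      refine Finset.sum_le_sum fun η hη => ?_
      have hx := (mem_sector.1 hη).1
      by_cases hηz : η z = false
      · rw [if_pos hηz, if_pos (by rw [hx, hηz]; decide), one_mul, Equiv.swap_apply_left]
      · rw [if_neg hηz]
        exact mul_nonneg (by split_ifs <;> norm_num) (sq_nonneg _)
    · rw [if_neg hz, if_neg hz]

theorem sum_rpow_sub_sectorAvg_le [Fintype ι] (h : IsBlockPartition adj blk φ) (hd : 2 ≤ d)
    (hN : 1 ≤ N) {M : ι → ℕ} {θ : ℝ} (h0 : 0 < θ) (h1 : θ < 1)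
    (hM : ∀ i, (M i : ℝ) ≤ θ * (blk i).card) {C : ℝ}
    (hC : ∀ x : Cube d N, ∑ w, (Cube.supDist x w + 1 : ℝ) * √θ ^ Cube.supDist x w ≤ C)
    {g : S → (S → Bool) → ℝ} (hg : ∀ x η, 0 ≤ g x η) {p : ℝ} (hp : 1 ≤ p) :
    ∑ i, ∑ x ∈ blk i, ∑ η ∈ sector blk M x, |g x η - sectorAvg blk i M g| ^ (2 * p) ≤
      2 * ((5216 * d ^ 2 + 16 * 3 ^ d * d ^ 2 * (3 * (36 * d * C) ^ 2 / θ)) * (N + 1) ^ 2) *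
        ∑ x, sectorEnergy adj blk M x fun x η => g x η ^ p := by
  obtain ⟨Q, hQ⟩ : ∃ Q : ℝ, Q = (5216 * d ^ 2 + 16 * 3 ^ d * d ^ 2 *
    (3 * (36 * d * C) ^ 2 / θ)) * (N + 1) ^ 2 := ⟨_, rfl⟩
  have hQ0 : 0 ≤ Q := by rw [hQ]; positivity
  rw [← hQ]
  have e1 : ∀ i, ∑ x ∈ blk i, ∑ η ∈ sector blk M x, |g x η - sectorAvg blk i M g| ^ (2 * p) ≤
      2 * Q * (∑ x ∈ blk i, (∑ j, fixedTagEnergy adj blk M x j (fun η => g x η ^ p) +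
        ∑ z, if adj x z then tagJumpEnergy blk M x z (fun x η => g x η ^ p) else 0)) := by
    intro i
    obtain ⟨c, hc⟩ := h.exists_block_variance_le hd hN h0 h1 (hM i) hC fun x η => g x η ^ p
    rw [← hQ] at hc
    have hmean : ∑ a ∈ (blk i).sigma fun x => sector blk M x, g a.1 a.2 =
        (((blk i).sigma fun x => sector blk M x).card : ℝ) * sectorAvg blk i M g := by
      rw [Finset.sum_sigma, Finset.card_sigma]
      by_cases hempty : ∀ x ∈ blk i, sector blk M x = ∅
      · rw [Finset.sum_eq_zero fun x hx => by rw [hempty x hx, Finset.sum_empty],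
          Finset.sum_eq_zero fun x hx => by rw [hempty x hx, Finset.card_empty]]
        simp
      push Not at hempty
      obtain ⟨x₀, hx₀, hne⟩ := hempty
      have hB : ((blk i).card : ℝ) ≠ 0 := by
        exact_mod_cast (Finset.card_pos.2 ⟨x₀, hx₀⟩).ne'
      have hK : ((sector blk M x₀).card : ℝ) ≠ 0 := by
        exact_mod_cast (Finset.card_pos.2 hne).ne'
      have e2 : ∀ x ∈ blk i, (sector blk M x).card = (sector blk M x₀).card := fun x hx =>
        h.card_sector_eq M hx hx₀
      have e3 : ∀ x ∈ blk i, ((sector blk M x).card : ℝ)⁻¹ * ∑ η ∈ sector blk M x, g x η =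
          ((sector blk M x₀).card : ℝ)⁻¹ * ∑ η ∈ sector blk M x, g x η := fun x hx => by
        rw [e2 x hx]
      unfold sectorAvg
      rw [Finset.sum_congr rfl e2, Finset.sum_const, smul_eq_mul, Nat.cast_mul,
        Finset.sum_congr rfl e3, ← Finset.mul_sum]
      field_simp
    have hp1 := sum_abs_sub_rpow_le ((blk i).sigma fun x => sector blk M x)
      (g := fun a => g a.1 a.2) (fun a => hg _ _) hp hmean c
    rw [Finset.sum_sigma, Finset.sum_sigma] at hp1
    refine hp1.trans ?_
    rw [mul_assoc]
    refine mul_le_mul_of_nonneg_left (hc.trans (mul_le_mul_of_nonneg_left ?_ hQ0)) zero_le_two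
    rw [Finset.sum_add_distrib]
    refine add_le_add le_rfl (Finset.sum_le_sum fun x _ => ?_)
    refine Finset.sum_le_sum_of_subset_of_nonneg (Finset.subset_univ _) fun z _ _ => ?_
    split_ifs
    · exact tagJumpEnergy_nonneg _ _ _ _
    · exact le_rfl
  refine (Finset.sum_le_sum fun i _ => e1 i).trans ?_
  rw [← Finset.mul_sum, h.sum_sum_blk]
  refine mul_le_mul_of_nonneg_left (Finset.sum_le_sum fun x _ => ?_) (by positivity)
  exact h.sum_fixedTagEnergy_add_sum_tagJumpEnergy_le M x fun x η => g x η ^ p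

end IsBlockPartition

theorem sum_sector_image [Fintype ι] (blk : ι → Finset S) (x : S) (F : (S → Bool) → ℝ) :
    ∑ M ∈ univ.image fun (η : S → Bool) j => particles (blk j) η, ∑ η ∈ sector blk M x, F η =
      ∑ η, if η x = true then F η else 0 := by
  rw [← Finset.sum_filter, ← Finset.sum_fiberwise_of_maps_to
    (s := univ.filter fun η : S → Bool => η x = true)
    (t := univ.image fun (η : S → Bool) j => particles (blk j) η)
    (g := fun (η : S → Bool) j => particles (blk j) η) (fun η _ => by simp)]
  refine Finset.sum_congr rfl fun M _ => Finset.sum_congr ?_ fun _ _ => rfl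
  ext η
  simp [mem_sector, funext_iff]

theorem exists_weight_eq (blk : ι → Finset S) {G : (S → Bool) → ℝ}
    (hG : ∀ η η', (∀ j, particles (blk j) η = particles (blk j) η') → G η = G η')
    (hG0 : ∀ η, 0 ≤ G η) :
    ∃ w : (ι → ℕ) → ℝ, (∀ M, 0 ≤ w M) ∧ ∀ η, G η = w fun j => particles (blk j) η := by
  refine ⟨fun M => if h : ∃ η, (fun j => particles (blk j) η) = M then G h.choose else 0,
    fun M => ?_, fun η => ?_⟩
  · dsimp only
    split_ifs
    · exact hG0 _
    · exact le_rfl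
  · have h : ∃ η', (fun j => particles (blk j) η') = fun j => particles (blk j) η := ⟨η, rfl⟩
    dsimp only
    rw [dif_pos h]
    exact hG _ _ fun j => (congrFun h.choose_spec j).symm

theorem IsBlockPartition.weighted_sum_rpow_sub_sectorAvg_le [Fintype ι]
    (h : IsBlockPartition adj blk φ) (hd : 2 ≤ d) (hN : 1 ≤ N) {θ : ℝ} (h0 : 0 < θ) (h1 : θ < 1)
    {good : (ι → ℕ) → Prop} (hM : ∀ M, good M → ∀ i, (M i : ℝ) ≤ θ * (blk i).card) {C : ℝ}
    (hC : ∀ x : Cube d N, ∑ w, (Cube.supDist x w + 1 : ℝ) * √θ ^ Cube.supDist x w ≤ C)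
    {G : (S → Bool) → ℝ}
    (hG : ∀ η η', (∀ j, particles (blk j) η = particles (blk j) η') → G η = G η')
    (hG0 : ∀ η, 0 ≤ G η)
    {g : S → (S → Bool) → ℝ} (hg : ∀ x η, 0 ≤ g x η) {p : ℝ} (hp : 1 ≤ p) :
    ∑ i, ∑ x ∈ blk i, (∑ η, if η x = true then G η *
      (|g x η - sectorAvg blk i (fun j => particles (blk j) η) g| ^ (2 * p) *
        if good fun j => particles (blk j) η then 1 else 0) else 0) ≤
      2 * ((5216 * d ^ 2 + 16 * 3 ^ d * d ^ 2 * (3 * (36 * d * C) ^ 2 / θ)) * (N + 1) ^ 2) *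
        ∑ x, ∑ y, ∑ z, if adj y z then ∑ η, (if η x = true then G η *
          ((if η y ≠ η z then (1 : ℝ) else 0) *
            (g (Equiv.swap y z x) (η ∘ Equiv.swap y z) ^ p - g x η ^ p) ^ 2) else 0) else 0 := by
  obtain ⟨w, hw0, hw⟩ := exists_weight_eq blk hG hG0
  obtain ⟨Q, hQ⟩ : ∃ Q : ℝ, Q = 2 * ((5216 * d ^ 2 + 16 * 3 ^ d * d ^ 2 *
    (3 * (36 * d * C) ^ 2 / θ)) * (N + 1) ^ 2) := ⟨_, rfl⟩
  have hQ0 : 0 ≤ Q := by rw [hQ]; positivity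
  set 𝓜 := univ.image fun (η : S → Bool) j => particles (blk j) η with h𝓜
  have hfun : ∀ M x η, η ∈ sector blk M x → (fun j => particles (blk j) η) = M :=
    fun M x η hη => funext (mem_sector.1 hη).2
  have hE0 : ∀ M x, 0 ≤ sectorEnergy adj blk M x fun x η => g x η ^ p := by
    intro M x
    refine Finset.sum_nonneg fun y _ => Finset.sum_nonneg fun z _ => ?_
    split_ifs
    · exact Finset.sum_nonneg fun η _ => mul_nonneg (by split_ifs <;> norm_num) (sq_nonneg _)
    · exact le_rfl
  have hl : ∑ i, ∑ x ∈ blk i, (∑ η, if η x = true then G η *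
      (|g x η - sectorAvg blk i (fun j => particles (blk j) η) g| ^ (2 * p) *
        if good fun j => particles (blk j) η then 1 else 0) else 0) =
      ∑ M ∈ 𝓜, w M * (if good M then 1 else 0) * ∑ i, ∑ x ∈ blk i, ∑ η ∈ sector blk M x,
        |g x η - sectorAvg blk i M g| ^ (2 * p) := by
    simp only [← sum_sector_image blk, Finset.mul_sum]
    rw [Finset.sum_comm (s := 𝓜)]
    refine Finset.sum_congr rfl fun i _ => ?_
    rw [Finset.sum_comm (s := 𝓜)]
    refine Finset.sum_congr rfl fun x _ => Finset.sum_congr rfl fun M _ =>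
      Finset.sum_congr rfl fun η hη => ?_
    rw [hw η, hfun M x η hη]
    ring
  have hr : ∑ x, ∑ y, ∑ z, (if adj y z then ∑ η, (if η x = true then G η *
          ((if η y ≠ η z then (1 : ℝ) else 0) *
            (g (Equiv.swap y z x) (η ∘ Equiv.swap y z) ^ p - g x η ^ p) ^ 2) else 0) else 0) =
      ∑ M ∈ 𝓜, w M * ∑ x, sectorEnergy adj blk M x fun x η => g x η ^ p := by
    unfold sectorEnergy
    simp only [← sum_sector_image blk, Finset.mul_sum]
    rw [Finset.sum_comm (s := 𝓜)]
    refine Finset.sum_congr rfl fun x _ => ?_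
    rw [Finset.sum_comm (s := 𝓜)]
    refine Finset.sum_congr rfl fun y _ => ?_
    rw [Finset.sum_comm (s := 𝓜)]
    refine Finset.sum_congr rfl fun z _ => ?_
    by_cases hyz : adj y z
    · simp only [if_pos hyz, Finset.mul_sum]
      refine Finset.sum_congr rfl fun M _ => Finset.sum_congr rfl fun η hη => ?_
      rw [hw η, hfun M x η hη]
    · simp [if_neg hyz]
  rw [hl, hr, ← hQ, Finset.mul_sum]
  refine Finset.sum_le_sum fun M _ => ?_
  have hE : 0 ≤ ∑ x, sectorEnergy adj blk M x fun x η => g x η ^ p :=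
    Finset.sum_nonneg fun x _ => hE0 M x
  by_cases hgood : good M
  · rw [if_pos hgood, mul_one, mul_left_comm, hQ]
    exact mul_le_mul_of_nonneg_left
      (h.sum_rpow_sub_sectorAvg_le hd hN h0 h1 (hM M hgood) hC hg hp) (hw0 M)
  · rw [if_neg hgood, mul_zero, zero_mul]
    exact mul_nonneg hQ0 (mul_nonneg (hw0 M) hE)

end

section

variable {d L ℓ m : ℕ} {ρ : ℝ} {v : Fin m → Fin d → ℤ}

/-- The Bernoulli product weight of a configuration. -/
def bernoulliWeight (d L : ℕ) (ρ : ℝ) (η : Config d L) : ℝ := ∏ y, if η y then ρ else 1 - ρ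

theorem bernoulliWeight_pos (hρ : ρ ∈ Set.Ioo (0 : ℝ) 1) (η : Config d L) :
    0 < bernoulliWeight d L ρ η :=
  Finset.prod_pos fun y _ => by
    have h1 := hρ.1
    have h2 := hρ.2
    split_ifs <;> linarith

theorem mul_tagWeight (x : Site d L) (η : Config d L) :
    ρ * tagWeight d L ρ x η = if η x = true then bernoulliWeight d L ρ η else 0 := by
  unfold tagWeight bernoulliWeight
  by_cases hx : η x = true
  · rw [if_pos hx, if_pos hx, one_mul,
      ← Finset.mul_prod_erase univ (fun y => if η y then ρ else 1 - ρ) (mem_univ x)]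
    simp only [if_pos hx]
  · rw [if_neg hx, if_neg hx, zero_mul, mul_zero]

theorem mul_tagExp (x : Site d L) (g : Config d L → ℝ) :
    ρ * tagExp d L ρ x g = ∑ η, if η x = true then bernoulliWeight d L ρ η * g η else 0 := by
  unfold tagExp
  rw [Finset.mul_sum]
  refine Finset.sum_congr rfl fun η _ => ?_
  rw [← mul_assoc, mul_tagWeight, ite_mul, zero_mul]

theorem mem_Box {x : Fin d → ℤ} : x ∈ Box d ℓ ↔ ∀ k, -(ℓ : ℤ) ≤ x k ∧ x k ≤ ℓ := by
  simp only [Box, Finset.mem_Icc, Pi.le_def]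
  exact ⟨fun h k => ⟨h.1 k, h.2 k⟩, fun h => ⟨fun k => (h k).1, fun k => (h k).2⟩⟩

theorem mem_block {w : Fin d → ℤ} {x : Site d L} :
    x ∈ block d L ℓ w ↔ (x : Fin d → ℤ) - w ∈ Box d ℓ := by
  simp [block]

/-- The point of `B_ℓ` with the given nonnegative coordinates relative to its lowest corner. -/
def boxPoint (ℓ : ℕ) (u : Cube d (2 * ℓ)) : Fin d → ℤ := fun k => (u k : ℕ) - (ℓ : ℤ)

theorem boxPoint_mem (u : Cube d (2 * ℓ)) : boxPoint ℓ u ∈ Box d ℓ := by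
  rw [mem_Box]
  intro k
  have := (u k).isLt
  unfold boxPoint
  omega

theorem boxPoint_injective : Function.Injective (boxPoint (d := d) ℓ) := by
  intro s t hst
  ext k
  have := congrFun hst k
  unfold boxPoint at this
  omega

theorem exists_boxPoint_eq {x : Fin d → ℤ} (hx : x ∈ Box d ℓ) : ∃ u, boxPoint ℓ u = x := by
  rw [mem_Box] at hx
  refine ⟨fun k => ⟨(x k + ℓ).toNat, ?_⟩, ?_⟩
  · have := hx k
    omega
  · ext k
    have := hx k
    simp only [boxPoint]
    omega

theorem card_Box : (Box d ℓ).card = Fintype.card (Cube d (2 * ℓ)) := by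
  rw [← Finset.card_univ, ← Finset.card_image_of_injective univ (boxPoint_injective (ℓ := ℓ))]
  congr 1
  ext x
  simp only [mem_image, mem_univ, true_and]
  exact ⟨exists_boxPoint_eq, fun ⟨u, hu⟩ => hu ▸ boxPoint_mem u⟩

theorem isBlockPartition_block (hv : ∀ i, ∀ z ∈ Box d ℓ, v i + z ∈ Box d L)
    (hex : ∀ x : Site d L, ∃! i : Fin m, (x : Fin d → ℤ) - v i ∈ Box d ℓ) :
    IsBlockPartition (SiteAdj (d := d) (L := L)) (fun i => block d L ℓ (v i))
      (fun i (u : Cube d (2 * ℓ)) => ⟨v i + boxPoint ℓ u, hv i _ (boxPoint_mem u)⟩) where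
  image i := by
    ext x
    simp only [mem_image, mem_univ, true_and, mem_block]
    constructor
    · rintro ⟨u, rfl⟩
      simpa using boxPoint_mem u
    · intro hx
      obtain ⟨u, hu⟩ := exists_boxPoint_eq hx
      exact ⟨u, Subtype.ext (by simp [hu])⟩
  inj i s t hst := boxPoint_injective (add_left_cancel (Subtype.ext_iff.1 hst))
  adj i s t hst := by
    refine Eq.trans (Finset.sum_congr rfl fun k _ => ?_) hst
    simp only [Pi.add_apply, boxPoint]
    ring
  disj i j hij := by
    rw [Finset.disjoint_left]
    intro x hi hj
    exact hij ((hex x).unique (mem_block.1 hi) (mem_block.1 hj))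
  cover x := by
    obtain ⟨i, hi, -⟩ := hex x
    exact ⟨i, mem_block.2 hi⟩

theorem bernoulliWeight_eq_of_particles_eq {ι : Type*} {blk : ι → Finset (Site d L)}
    (hdisj : ∀ i j, i ≠ j → Disjoint (blk i) (blk j)) (hcov : ∀ x, ∃ j, x ∈ blk j)
    (η η' : Config d L) (h : ∀ j, particles (blk j) η = particles (blk j) η') :
    bernoulliWeight d L ρ η = bernoulliWeight d L ρ η' := by
  refine eq_of_particles_eq (W := blk) ?_ _ η η' rfl h (fun x _ => hcov x) hdisj
  intro j s _ t _ η
  exact Equiv.prod_comp (Equiv.swap s t) fun y => if η y then ρ else 1 - ρ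

theorem condExpCounts_eq (hρ : ρ ∈ Set.Ioo (0 : ℝ) 1)
    (hG : ∀ η η' : Config d L, (∀ j, particles (block d L ℓ (v j)) η =
      particles (block d L ℓ (v j)) η') → bernoulliWeight d L ρ η = bernoulliWeight d L ρ η')
    (y : Site d L) (M : Fin m → ℕ) (g : Config d L → ℝ) :
    condExpCounts d L ℓ m ρ v y M g =
      ((sector (fun j => block d L ℓ (v j)) M y).card : ℝ)⁻¹ *
        ∑ η ∈ sector (fun j => block d L ℓ (v j)) M y, g η := by
  have key : ∀ f : Config d L → ℝ,
      ρ * tagExp d L ρ y (fun η => if ∀ i, blockCount d L ℓ (v i) η = M i then f η else 0) =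
        ∑ η ∈ sector (fun j => block d L ℓ (v j)) M y, bernoulliWeight d L ρ η * f η := by
    intro f
    rw [mul_tagExp, sector, Finset.sum_filter]
    refine Finset.sum_congr rfl fun η _ => ?_
    by_cases h1 : η y = true
    · by_cases h2 : ∀ i, blockCount d L ℓ (v i) η = M i
      · rw [if_pos h1, if_pos h2, if_pos ⟨h1, h2⟩]
      · rw [if_pos h1, if_neg h2, if_neg (fun h => h2 h.2), mul_zero]
    · rw [if_neg h1, if_neg (fun h => h1 h.1)]
  unfold condExpCounts
  rw [← mul_div_mul_left _ _ hρ.1.ne', key, key]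
  rcases (sector (fun j => block d L ℓ (v j)) M y).eq_empty_or_nonempty with h0 | ⟨η₀, h0⟩
  · simp [h0]
  · have hw : ∀ η ∈ sector (fun j => block d L ℓ (v j)) M y,
        bernoulliWeight d L ρ η = bernoulliWeight d L ρ η₀ := fun η hη =>
      hG η η₀ fun j => by rw [(mem_sector.1 hη).2 j, (mem_sector.1 h0).2 j]
    have hsum : ∀ f : Config d L → ℝ,
        ∑ η ∈ sector (fun j => block d L ℓ (v j)) M y, bernoulliWeight d L ρ η * f η =
        bernoulliWeight d L ρ η₀ * ∑ η ∈ sector (fun j => block d L ℓ (v j)) M y, f η := fun f => by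
      rw [Finset.mul_sum]
      exact Finset.sum_congr rfl fun η hη => by rw [hw η hη]
    rw [hsum, hsum, mul_div_mul_left _ _ (bernoulliWeight_pos hρ η₀).ne', Finset.sum_const,
      nsmul_eq_mul, mul_one, div_eq_inv_mul]

end

/-- **Conditional spectral gap with local particle-number averaging.**
Let `d ≥ 2`, `ρ ∈ (0,1)` and `p ≥ 1`.  There exists `C(d,ρ,p) < ∞` such that for all
`ℓ, L ≥ 1` with `(2ℓ+1) ∣ (2L+1)` and `B_L` partitioned into
`m = (2L+1)^d/(2ℓ+1)^d` disjoint translates `B_{ℓ,1},…,B_{ℓ,m}` of `B_ℓ` (the translate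
`B_{ℓ,i} = v_i + B_ℓ`), and every (bounded) nonnegative function `h` on
`{(x,η) ∈ B_L × {0,1}^{B_L} : η(x) = 1}`,
`Σ_{x ∈ B_L} ⟨|h − π^ℓ_L h(𝐌,x)|^{2p} 1^ρ(𝐌) | x⟩
   ≤ C ℓ² Σ_{x ∈ B_L} Σ_{e ∈ 𝔹_L} ⟨a_e ((h^e)^p − h^p)² | x⟩`.
The left side is written as a sum over the blocks `i` and the sites `x ∈ B_{ℓ,i}`, the
sum over unordered edges `e = {y,z}` of `𝔹_L` is written as half the sum over ordered
pairs of adjacent sites, `a_e(η) = 1_{η(y) ≠ η(z)}`, and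
`h^e(x,η) = h(x^e, η^e)` with `x^e` the transposition of the endpoints of `e`. -/
theorem conditional_spectral_gap_local_averaging
    (d : ℕ) (hd : 2 ≤ d) (ρ : ℝ) (hρ : ρ ∈ Set.Ioo (0 : ℝ) 1) (p : ℝ) (hp : 1 ≤ p) :
    ∃ C : ℝ, ∀ ℓ L : ℕ, 1 ≤ ℓ → 1 ≤ L → (2 * ℓ + 1) ∣ (2 * L + 1) →
      ∀ m : ℕ, ∀ v : Fin m → Fin d → ℤ,
        m * (2 * ℓ + 1) ^ d = (2 * L + 1) ^ d →
        (∀ i, ∀ z ∈ Box d ℓ, v i + z ∈ Box d L) →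
        (∀ x : Site d L, ∃! i : Fin m, (x : Fin d → ℤ) - v i ∈ Box d ℓ) →
        ∀ h : Site d L → Config d L → ℝ, (∀ x η, 0 ≤ h x η) →
          (∑ i : Fin m, ∑ x ∈ block d L ℓ (v i),
            tagExp d L ρ x (fun η =>
              |h x η - piAvg d L ℓ m ρ v i (fun i' => blockCount d L ℓ (v i') η) h|
                  ^ (2 * p) *
                (if goodCounts d L ℓ m ρ v η then 1 else 0))) ≤
          C * (ℓ : ℝ) ^ 2 *
            ((1 : ℝ) / 2 * ∑ x : Site d L, ∑ y : Site d L, ∑ z : Site d L,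
              if SiteAdj y z then
                tagExp d L ρ x (fun η =>
                  (if η y ≠ η z then (1 : ℝ) else 0) *
                    ((h (Equiv.swap y z x) (η ∘ Equiv.swap y z)) ^ p - (h x η) ^ p) ^ 2)
              else 0) := by
  have hθ0 : 0 < (ρ + 1) / 2 := by have := hρ.1; linarith
  have hθ1 : (ρ + 1) / 2 < 1 := by have := hρ.2; linarith
  have hβ1 : √((ρ + 1) / 2) < 1 := by
    rw [Real.sqrt_lt' one_pos]
    simpa using hθ1
  obtain ⟨D, -, hD⟩ := Cube.exists_sum_geometric_le d (Real.sqrt_nonneg ((ρ + 1) / 2)) hβ1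
  set Q : ℝ := 5216 * d ^ 2 + 16 * 3 ^ d * d ^ 2 * (3 * (36 * d * D) ^ 2 / ((ρ + 1) / 2)) with hQ
  have hQ0 : 0 ≤ Q := by positivity
  refine ⟨36 * Q, fun ℓ L hℓ _ _ m v _ hv hex h hh => ?_⟩
  have hP := isBlockPartition_block hv hex
  have hG := bernoulliWeight_eq_of_particles_eq (ρ := ρ) hP.disj hP.cover
  have hcard : ∀ i, (Box d ℓ).card = (block d L ℓ (v i)).card := fun i => by
    rw [card_Box, hP.card_blk i]
  have hpi : ∀ i M, piAvg d L ℓ m ρ v i M h =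
      sectorAvg (fun j => block d L ℓ (v j)) i M h := fun i M => by
    unfold piAvg sectorAvg
    rw [hcard i]
    simp only [condExpCounts_eq hρ hG]
  have hmain := hP.weighted_sum_rpow_sub_sectorAvg_le hd (by omega) hθ0 hθ1
    (good := fun M => ∀ i, ρ / 2 * ((Box d ℓ).card : ℝ) ≤ (M i : ℝ) ∧
      (M i : ℝ) ≤ (ρ + 1) / 2 * ((Box d ℓ).card : ℝ))
    (fun M hM i => by rw [← hcard i]; exact (hM i).2)
    (hD (2 * ℓ)) hG (fun η => (bernoulliWeight_pos hρ η).le) hh hp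
  refine le_of_mul_le_mul_left ?_ hρ.1
  refine le_trans (le_of_eq ?_) (hmain.trans ?_)
  · rw [Finset.mul_sum]
    refine Finset.sum_congr rfl fun i _ => ?_
    rw [Finset.mul_sum]
    refine Finset.sum_congr rfl fun x _ => ?_
    rw [mul_tagExp]
    simp only [hpi]
    refine Finset.sum_congr rfl fun η _ => ?_
    by_cases hη : η x = true
    · rw [if_pos hη, if_pos hη]
      by_cases hgood : goodCounts d L ℓ m ρ v η
      · rw [if_pos hgood]
        exact congrArg₂ _ rfl (congrArg₂ _ rfl (if_pos hgood).symm)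
      · rw [if_neg hgood]
        exact congrArg₂ _ rfl (congrArg₂ _ rfl (if_neg hgood).symm)
    · rw [if_neg hη, if_neg hη]
  · have hr : ρ * ∑ x : Site d L, ∑ y : Site d L, ∑ z : Site d L,
        (if SiteAdj y z then
          tagExp d L ρ x (fun η =>
            (if η y ≠ η z then (1 : ℝ) else 0) *
              ((h (Equiv.swap y z x) (η ∘ Equiv.swap y z)) ^ p - (h x η) ^ p) ^ 2)
        else 0) =
        ∑ x : Site d L, ∑ y, ∑ z, if SiteAdj y z then ∑ η : Config d L,
          (if η x = true then bernoulliWeight d L ρ η *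
            ((if η y ≠ η z then (1 : ℝ) else 0) *
              (h (Equiv.swap y z x) (η ∘ Equiv.swap y z) ^ p - h x η ^ p) ^ 2) else 0) else 0 := by
      simp only [Finset.mul_sum, mul_ite, mul_tagExp, mul_zero]
    have hnn : 0 ≤ ∑ x : Site d L, ∑ y, ∑ z, if SiteAdj y z then ∑ η : Config d L,
          (if η x = true then bernoulliWeight d L ρ η *
            ((if η y ≠ η z then (1 : ℝ) else 0) *
              (h (Equiv.swap y z x) (η ∘ Equiv.swap y z) ^ p - h x η ^ p) ^ 2) else 0) else 0 := by
      refine Finset.sum_nonneg fun x _ => Finset.sum_nonneg fun y _ =>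
        Finset.sum_nonneg fun z _ => ?_
      split_ifs
      · refine Finset.sum_nonneg fun η _ => ?_
        have := (bernoulliWeight_pos hρ η).le
        positivity
      · exact le_rfl
    rw [mul_left_comm ρ, mul_left_comm ρ, hr, ← hQ, ← mul_assoc (36 * Q * (ℓ : ℝ) ^ 2)]
    refine le_trans (le_of_eq (congrArg _ (Finset.sum_congr rfl fun x _ =>
      Finset.sum_congr rfl fun y _ => Finset.sum_congr rfl fun z _ => ?_)))
      (mul_le_mul_of_nonneg_right ?_ hnn)
    · by_cases hyz : SiteAdj y z
      · rw [if_pos hyz, if_pos hyz]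
      · rw [if_neg hyz, if_neg hyz]
    have h1 : (1 : ℝ) ≤ ℓ := by exact_mod_cast hℓ
    have h2 : (((2 * ℓ : ℕ) : ℝ) + 1) ^ 2 ≤ (3 * ℓ) ^ 2 := by
      refine pow_le_pow_left₀ (by positivity) ?_ 2
      push_cast
      linarith
    calc 2 * (Q * (((2 * ℓ : ℕ) : ℝ) + 1) ^ 2) ≤ 2 * (Q * (3 * ℓ) ^ 2) := by gcongr
      _ = 36 * Q * (ℓ : ℝ) ^ 2 * (1 / 2) := by ring

end
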